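/- arXiv:0805.1717 — 7 statements merged into one kernel-verified Lean document; each statement's English description precedes it below -/
import Mathlib

section
/- There exists exactly one function F : [0,∞) → ℝ that is continuous, nondecreasing, satisfies F(0) = 0 and F(x) → 1 as x → ∞, and satisfies the functional equations 2·F(x) = F(x−1) + 1 for all x ≥ 1 and 2·F(x) = F(x/(1−x)) for all 0 ≤ x < 1. -/
/-!
Let `T x = x - 1` for `x ≥ 1` and `T x = x / (1 - x)` for `x < 1`. The functional equations say that
`F` carries `T` to the doubling map, so they force the binary digits of `F x` to record on which
side of `1` the points `x, T x, T² x, …` lie. Reading this as a definition gives existence.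
Everything else follows from one remark: a bounded quantity, each of whose values is at most half of
another of its values, is nonpositive. Applied to `|F₁ x - F₂ x|` it gives uniqueness, applied to
`F x - F y` for `x ≤ y` it gives monotonicity, and applied to the distance from a point of `[0, 1]`
to the range of `F` it shows that the range is dense in `[0, 1]`, so that the monotone function `F`
has no jumps.
-/

open Set Filter

/-- The defining properties of the Minkowski question mark distribution function on `[0,∞)`. -/
def IsMinkowskiQuestionMark (F : ℝ → ℝ) : Prop :=
  ContinuousOn F (Set.Ici 0) ∧ MonotoneOn F (Set.Ici 0) ∧ F 0 = 0 ∧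
    Filter.Tendsto F Filter.atTop (nhds 1) ∧
    (∀ x : ℝ, 1 ≤ x → 2 * F x = F (x - 1) + 1) ∧
    (∀ x : ℝ, 0 ≤ x → x < 1 → 2 * F x = F (x / (1 - x)))

theorem nonpos_of_le_mul_of_lt_one {α : Type*} {s : Set α} {f : α → ℝ} {c : ℝ} (hc₀ : 0 ≤ c)
    (hc₁ : c < 1) (hf : BddAbove (f '' s)) (h : ∀ a ∈ s, ∃ b ∈ s, f a ≤ c * f b) {a : α}
    (ha : a ∈ s) : f a ≤ 0 := by
  have hle : ∀ b ∈ s, f b ≤ sSup (f '' s) := fun b hb ↦ le_csSup hf (mem_image_of_mem f hb)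
  have hsup : sSup (f '' s) ≤ c * sSup (f '' s) := by
    refine csSup_le ⟨f a, mem_image_of_mem f ha⟩ ?_
    rintro _ ⟨b, hb, rfl⟩
    obtain ⟨b', hb', hbb'⟩ := h b hb
    exact hbb'.trans (mul_le_mul_of_nonneg_left (hle b' hb') hc₀)
  have : sSup (f '' s) ≤ 0 := by nlinarith
  exact (hle a ha).trans this

theorem Icc_zero_one_subset_closure_of_half_mem {s : Set ℝ} (hs : s.Nonempty)
    (h₀ : ∀ y ∈ s, y / 2 ∈ s) (h₁ : ∀ y ∈ s, (y + 1) / 2 ∈ s) : Icc 0 1 ⊆ closure s := by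
  have hbdd : BddAbove ((Metric.infDist · s) '' Icc (0 : ℝ) 1) :=
    isCompact_Icc.bddAbove_image (Metric.continuous_infDist_pt s).continuousOn
  intro t ht
  rw [Metric.mem_closure_iff_infDist_zero hs]
  refine le_antisymm (nonpos_of_le_mul_of_lt_one (c := 2⁻¹) (by norm_num) (by norm_num) hbdd
    (fun t ht ↦ ?_) ht) Metric.infDist_nonneg
  have halve {t' : ℝ} (h : ∀ y ∈ s, ∃ z ∈ s, 2 * (t - z) = t' - y) :
      Metric.infDist t s ≤ 2⁻¹ * Metric.infDist t' s := by
    rw [le_inv_mul_iff₀ two_pos, Metric.le_infDist hs]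
    intro y hy
    obtain ⟨z, hz, hzy⟩ := h y hy
    rw [Real.dist_eq, ← hzy, abs_mul, abs_two]
    exact mul_le_mul_of_nonneg_left (Metric.infDist_le_dist_of_mem hz) zero_le_two
  rcases le_total t 2⁻¹ with h | h
  · exact ⟨2 * t, ⟨by linarith [ht.1], by linarith⟩,
      halve fun y hy ↦ ⟨y / 2, h₀ y hy, by ring⟩⟩
  · exact ⟨2 * t - 1, ⟨by linarith, by linarith [ht.2]⟩,
      halve fun y hy ↦ ⟨(y + 1) / 2, h₁ y hy, by ring⟩⟩

theorem continuous_of_monotone_of_subset_closure_range {α β : Type*} [LinearOrder α]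
    [TopologicalSpace α] [OrderTopology α] [LinearOrder β] [TopologicalSpace β] [OrderTopology β]
    [DenselyOrdered β] {f : α → β} {s : Set β} [s.OrdConnected] (hf : Monotone f)
    (hfs : ∀ x, f x ∈ s) (hs : s ⊆ closure (range f)) : Continuous f := by
  have hdense : DenseRange (s.codRestrict f hfs) := by
    rw [DenseRange, Subtype.dense_iff, ← range_comp]
    exact hs
  have hmono : Monotone (s.codRestrict f hfs) := fun _ _ hxy ↦ hf hxy
  exact continuous_subtype_val.comp (hmono.continuous_of_denseRange hdense)

/-- The functional equations of the Minkowski question mark function on `[0,∞)`, without any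
regularity assumption. -/
structure MinkowskiEquations (F : ℝ → ℝ) : Prop where
  of_one_le : ∀ x, 1 ≤ x → 2 * F x = F (x - 1) + 1
  of_lt_one : ∀ x, 0 ≤ x → x < 1 → 2 * F x = F (x / (1 - x))

theorem MinkowskiEquations.eqOn {F₁ F₂ : ℝ → ℝ} (h₁ : MinkowskiEquations F₁)
    (h₂ : MinkowskiEquations F₂) (hb₁ : Bornology.IsBounded (F₁ '' Ici 0))
    (hb₂ : Bornology.IsBounded (F₂ '' Ici 0)) : EqOn F₁ F₂ (Ici 0) := by
  obtain ⟨C₁, hC₁⟩ := hb₁.exists_norm_le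
  obtain ⟨C₂, hC₂⟩ := hb₂.exists_norm_le
  have hbdd : BddAbove ((fun x ↦ |F₁ x - F₂ x|) '' Ici 0) := by
    refine ⟨C₁ + C₂, ?_⟩
    rintro _ ⟨x, hx, rfl⟩
    exact norm_sub_le_of_le (hC₁ _ (mem_image_of_mem F₁ hx)) (hC₂ _ (mem_image_of_mem F₂ hx))
  intro x hx
  refine sub_eq_zero.1 (abs_nonpos_iff.1 (nonpos_of_le_mul_of_lt_one (c := 2⁻¹)
    (by norm_num) (by norm_num) hbdd (fun x (hx : 0 ≤ x) ↦ ?_) hx))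
  have halve {y : ℝ} (h : 2 * (F₁ x - F₂ x) = F₁ y - F₂ y) :
      |F₁ x - F₂ x| ≤ 2⁻¹ * |F₁ y - F₂ y| := by
    rw [← h, abs_mul, abs_two, inv_mul_cancel_left₀ two_ne_zero]
  rcases le_or_gt 1 x with hx1 | hx1
  · exact ⟨x - 1, sub_nonneg.2 hx1,
      halve (by linarith [h₁.of_one_le x hx1, h₂.of_one_le x hx1])⟩
  · exact ⟨x / (1 - x), div_nonneg hx (sub_nonneg.2 hx1.le),
      halve (by linarith [h₁.of_lt_one x hx hx1, h₂.of_lt_one x hx hx1])⟩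

namespace IsMinkowskiQuestionMark

variable {F : ℝ → ℝ}

theorem minkowskiEquations (hF : IsMinkowskiQuestionMark F) : MinkowskiEquations F :=
  let ⟨_, _, _, _, hge, hlt⟩ := hF
  ⟨hge, hlt⟩

theorem mapsTo_Icc (hF : IsMinkowskiQuestionMark F) : MapsTo F (Ici 0) (Icc 0 1) := by
  obtain ⟨-, hmono, h0, hlim, -, -⟩ := hF
  intro x hx
  refine ⟨h0 ▸ hmono self_mem_Ici hx hx, ge_of_tendsto hlim ?_⟩
  filter_upwards [eventually_ge_atTop x] with y hy
  exact hmono hx (hx.trans hy) hy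

theorem isBounded_image (hF : IsMinkowskiQuestionMark F) : Bornology.IsBounded (F '' Ici 0) :=
  (Metric.isBounded_Icc 0 1).subset hF.mapsTo_Icc.image_subset

end IsMinkowskiQuestionMark

/-- The map carried by the question mark function to the doubling map: the orientation-preserving
Farey map in the coordinate `x = t / (1 - t)`, `t ∈ [0, 1)`, extended to negative `x` by its left
branch. -/
noncomputable def fareyMap (x : ℝ) : ℝ :=
  if 1 ≤ x then x - 1 else x / (1 - x)

/-- The branch of `fareyMap` on which `x` lies: `1` on `[1,∞)` and `0` to the left of it. -/
noncomputable def fareyDigit (x : ℝ) : Fin 2 :=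
  if 1 ≤ x then 1 else 0

/-- The Minkowski question mark distribution function, whose `n`-th binary digit at `x` is the
branch visited by the `n`-th iterate of `x` under `fareyMap`. Negative numbers are never mapped to
`[1,∞)`, so it vanishes on `(-∞, 0]`. -/
noncomputable def minkowskiQuestionMark (x : ℝ) : ℝ :=
  Real.ofDigits fun n ↦ fareyDigit (fareyMap^[n] x)

theorem minkowskiQuestionMark_mem_Icc (x : ℝ) : minkowskiQuestionMark x ∈ Icc (0 : ℝ) 1 :=
  ⟨Real.ofDigits_nonneg _, Real.ofDigits_le_one _⟩

theorem two_mul_minkowskiQuestionMark (x : ℝ) :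
    2 * minkowskiQuestionMark x = minkowskiQuestionMark (fareyMap x) + (fareyDigit x : ℕ) := by
  rw [minkowskiQuestionMark, Real.ofDigits_eq_sum_add_ofDigits _ 1, Finset.sum_range_one]
  simp only [Real.ofDigitsTerm, Function.iterate_zero_apply, Function.iterate_succ_apply,
    minkowskiQuestionMark]
  push_cast
  ring

theorem two_mul_minkowskiQuestionMark_of_one_le {x : ℝ} (hx : 1 ≤ x) :
    2 * minkowskiQuestionMark x = minkowskiQuestionMark (x - 1) + 1 := by
  simp [two_mul_minkowskiQuestionMark, fareyMap, fareyDigit, hx]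

theorem two_mul_minkowskiQuestionMark_of_lt_one {x : ℝ} (hx : x < 1) :
    2 * minkowskiQuestionMark x = minkowskiQuestionMark (x / (1 - x)) := by
  simp [two_mul_minkowskiQuestionMark, fareyMap, fareyDigit, hx.not_ge]

theorem minkowskiQuestionMark_zero : minkowskiQuestionMark 0 = 0 := by
  have h := two_mul_minkowskiQuestionMark_of_lt_one zero_lt_one
  rw [zero_div] at h
  linarith

theorem monotone_minkowskiQuestionMark : Monotone minkowskiQuestionMark := by
  let gap (p : ℝ × ℝ) : ℝ := minkowskiQuestionMark p.1 - minkowskiQuestionMark p.2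
  have hbdd : BddAbove (gap '' {p | p.1 ≤ p.2}) := by
    refine ⟨1, ?_⟩
    rintro _ ⟨p, -, rfl⟩
    linarith [(minkowskiQuestionMark_mem_Icc p.1).2, (minkowskiQuestionMark_mem_Icc p.2).1]
  suffices h : ∀ p ∈ {p : ℝ × ℝ | p.1 ≤ p.2}, ∃ q ∈ {p | p.1 ≤ p.2}, gap p ≤ 2⁻¹ * gap q from
    fun x y hxy ↦ sub_nonpos.1 <| nonpos_of_le_mul_of_lt_one (f := gap) (a := (x, y))
      (by norm_num) (by norm_num) hbdd h hxy
  rintro ⟨x, y⟩ (hxy : x ≤ y)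
  rcases le_or_gt 1 x with hx | hx
  · refine ⟨(x - 1, y - 1), sub_le_sub_right hxy 1, ?_⟩
    linarith [two_mul_minkowskiQuestionMark_of_one_le hx,
      two_mul_minkowskiQuestionMark_of_one_le (hx.trans hxy)]
  rcases le_or_gt 1 y with hy | hy
  · refine ⟨(0, 0), le_refl (0 : ℝ), ?_⟩
    linarith [two_mul_minkowskiQuestionMark_of_lt_one hx,
      two_mul_minkowskiQuestionMark_of_one_le hy,
      (minkowskiQuestionMark_mem_Icc (x / (1 - x))).2, (minkowskiQuestionMark_mem_Icc (y - 1)).1]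
  · refine ⟨(x / (1 - x), y / (1 - y)), ?_, ?_⟩
    · rw [mem_ofPred_eq, div_le_div_iff₀ (sub_pos.2 hx) (sub_pos.2 hy)]
      linarith
    · linarith [two_mul_minkowskiQuestionMark_of_lt_one hx,
        two_mul_minkowskiQuestionMark_of_lt_one hy]

theorem Icc_subset_closure_range_minkowskiQuestionMark :
    Icc 0 1 ⊆ closure (range minkowskiQuestionMark) := by
  suffices h : Icc 0 1 ⊆ closure (minkowskiQuestionMark '' Ici 0) from
    h.trans (closure_mono (image_subset_range _ _))
  refine Icc_zero_one_subset_closure_of_half_mem (nonempty_Ici.image _) ?_ ?_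
  · rintro _ ⟨x, hx : 0 ≤ x, rfl⟩
    have hlt : x / (1 + x) < 1 := (div_lt_one (by positivity)).2 (lt_one_add x)
    have hmap : x / (1 + x) / (1 - x / (1 + x)) = x := by
      field_simp
      ring
    refine ⟨x / (1 + x), div_nonneg hx (by positivity), ?_⟩
    have := two_mul_minkowskiQuestionMark_of_lt_one hlt
    rw [hmap] at this
    linarith
  · rintro _ ⟨x, hx : 0 ≤ x, rfl⟩
    refine ⟨x + 1, add_nonneg hx zero_le_one, ?_⟩
    have := two_mul_minkowskiQuestionMark_of_one_le (le_add_of_nonneg_left hx)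
    rw [add_sub_cancel_right] at this
    linarith

theorem continuous_minkowskiQuestionMark : Continuous minkowskiQuestionMark :=
  continuous_of_monotone_of_subset_closure_range monotone_minkowskiQuestionMark
    minkowskiQuestionMark_mem_Icc Icc_subset_closure_range_minkowskiQuestionMark

theorem tendsto_minkowskiQuestionMark_atTop : Tendsto minkowskiQuestionMark atTop (nhds 1) := by
  have hbdd : BddAbove (range minkowskiQuestionMark) :=
    ⟨1, forall_mem_range.2 fun x ↦ (minkowskiQuestionMark_mem_Icc x).2⟩
  obtain ⟨L, hL⟩ : ∃ L, Tendsto minkowskiQuestionMark atTop (nhds L) :=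
    ⟨_, tendsto_atTop_ciSup monotone_minkowskiQuestionMark hbdd⟩
  have hshift : Tendsto (fun x ↦ minkowskiQuestionMark (x - 1) + 1) atTop (nhds (L + 1)) :=
    (hL.comp (tendsto_atTop_add_const_right _ (-1) tendsto_id)).add_const 1
  have hdouble : Tendsto (fun x ↦ minkowskiQuestionMark (x - 1) + 1) atTop (nhds (2 * L)) := by
    refine (hL.const_mul 2).congr' ?_
    filter_upwards [eventually_ge_atTop 1] with x hx
    exact two_mul_minkowskiQuestionMark_of_one_le hx
  have : L = 1 := by linarith [tendsto_nhds_unique hdouble hshift]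
  rwa [this] at hL

theorem isMinkowskiQuestionMark_minkowskiQuestionMark :
    IsMinkowskiQuestionMark minkowskiQuestionMark :=
  ⟨continuous_minkowskiQuestionMark.continuousOn, monotone_minkowskiQuestionMark.monotoneOn _,
    minkowskiQuestionMark_zero, tendsto_minkowskiQuestionMark_atTop,
    fun _ hx ↦ two_mul_minkowskiQuestionMark_of_one_le hx,
    fun _ _ hx ↦ two_mul_minkowskiQuestionMark_of_lt_one hx⟩

theorem exists_unique_minkowski_question_mark_general :
    (∃ F : ℝ → ℝ, IsMinkowskiQuestionMark F) ∧
    (∀ F₁ F₂ : ℝ → ℝ, MinkowskiEquations F₁ → MinkowskiEquations F₂ →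
      Bornology.IsBounded (F₁ '' Ici 0) → Bornology.IsBounded (F₂ '' Ici 0) →
      EqOn F₁ F₂ (Ici 0)) :=
  ⟨⟨_, isMinkowskiQuestionMark_minkowskiQuestionMark⟩, fun _ _ h₁ h₂ ↦ h₁.eqOn h₂⟩

theorem exists_unique_minkowski_question_mark :
    (∃ F : ℝ → ℝ, IsMinkowskiQuestionMark F) ∧
    (∀ F₁ F₂ : ℝ → ℝ, IsMinkowskiQuestionMark F₁ → IsMinkowskiQuestionMark F₂ →
      Set.EqOn F₁ F₂ (Set.Ici 0)) :=
  exists_unique_minkowski_question_mark_general.imp_right fun h _ _ h₁ h₂ ↦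
    h _ _ h₁.minkowskiEquations h₂.minkowskiEquations h₁.isBounded_image h₂.isBounded_image
end

section
/- F(x) + F(1/x) = 1 for all real x > 0. -/
open Set Filter

/-!
The defect `D x = F x + F x⁻¹ - 1` is invariant under `x ↦ x⁻¹`, vanishes at `1`, and the two
functional equations combine to `2 * D x = D (x - 1)` for `1 < x`. Hence `|D|` at any point is at
most half of its value at some other point, which is impossible for a bounded nonzero function.
-/

lemma nonpos_of_forall_exists_le_mul {α : Type*} {s : Set α} {g : α → ℝ} {r : ℝ}
    (hr₀ : 0 ≤ r) (hr₁ : r < 1) (hg : BddAbove (g '' s))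
    (h : ∀ x ∈ s, ∃ y ∈ s, g x ≤ r * g y) {x : α} (hx : x ∈ s) : g x ≤ 0 := by
  have le_sup : ∀ y ∈ s, g y ≤ sSup (g '' s) := fun y hy => le_csSup hg (mem_image_of_mem g hy)
  have sup_le : sSup (g '' s) ≤ r * sSup (g '' s) := by
    refine csSup_le (nonempty_of_mem (mem_image_of_mem g hx)) (forall_mem_image.2 fun y hy => ?_)
    obtain ⟨z, hz, hyz⟩ := h y hy
    exact hyz.trans (mul_le_mul_of_nonneg_left (le_sup z hz) hr₀)
  have sup_nonpos : sSup (g '' s) ≤ 0 := by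
    by_contra! hpos
    exact sup_le.not_gt (mul_lt_of_lt_one_left hpos hr₁)
  exact (le_sup x hx).trans sup_nonpos

lemma mapsTo_Icc_of_monotoneOn_Ici_of_tendsto {α β : Type*} [Preorder α]
    [IsDirectedOrder α] [TopologicalSpace β] [Preorder β] [ClosedIciTopology β]
    {f : α → β} {a : α} {l : β}
    (hf : MonotoneOn f (Ici a)) (hl : Tendsto f atTop (nhds l)) :
    MapsTo f (Ici a) (Icc (f a) l) := fun x hx =>
  have : Nonempty α := ⟨a⟩
  ⟨hf self_mem_Ici hx hx,
    ge_of_tendsto hl ((eventually_ge_atTop x).mono fun _ hxy => hf hx (hx.trans hxy) hxy)⟩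

section SymmetryDefect

variable {K E : Type*} [Field K]

/-- The failure at `x` of the reflection symmetry `F x + F x⁻¹ = c`, where `c` stands for the total
mass of `F` (which is `1` for a probability distribution function). -/
def symmetryDefect [AddCommGroup E] (c : E) (F : K → E) (x : K) : E :=
  F x + F x⁻¹ - c

lemma symmetryDefect_inv [AddCommGroup E] (c : E) (F : K → E) (x : K) :
    symmetryDefect c F x⁻¹ = symmetryDefect c F x := by
  rw [symmetryDefect, symmetryDefect, inv_inv, add_comm]

variable [LinearOrder K] [IsStrictOrderedRing K]

lemma symmetryDefect_one [AddCommGroup E] [Module ℝ E] {c : E} {F : K → E}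
    (hsub : ∀ x : K, 1 ≤ x → (2 : ℝ) • F x = F (x - 1) + c)
    (hdiv : ∀ x : K, 0 ≤ x → x < 1 → (2 : ℝ) • F x = F (x / (1 - x))) :
    symmetryDefect c F 1 = 0 := by
  have F_zero : F 0 = 0 := by
    simpa [two_smul] using hdiv 0 le_rfl one_pos
  have F_one : (2 : ℝ) • F 1 = c := by
    simpa [F_zero] using hsub 1 le_rfl
  rw [symmetryDefect, inv_one, ← two_smul ℝ, F_one, sub_self]

lemma two_smul_symmetryDefect [AddCommGroup E] [Module ℝ E] {c : E} {F : K → E}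
    (hsub : ∀ x : K, 1 ≤ x → (2 : ℝ) • F x = F (x - 1) + c)
    (hdiv : ∀ x : K, 0 ≤ x → x < 1 → (2 : ℝ) • F x = F (x / (1 - x))) {x : K} (hx : 1 < x) :
    (2 : ℝ) • symmetryDefect c F x = symmetryDefect c F (x - 1) := by
  have hx₀ : 0 < x := one_pos.trans hx
  have inv_div_one_sub_inv : x⁻¹ / (1 - x⁻¹) = (x - 1)⁻¹ := by
    field_simp
  have two_smul_F_inv : (2 : ℝ) • F x⁻¹ = F (x - 1)⁻¹ := by
    rw [hdiv x⁻¹ (inv_nonneg.2 hx₀.le) (inv_lt_one_of_one_lt₀ hx), inv_div_one_sub_inv]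
  rw [symmetryDefect, smul_sub, smul_add, hsub x hx.le, two_smul_F_inv, two_smul, symmetryDefect]
  abel

variable [NormedAddCommGroup E] {F : K → E}

lemma bddAbove_norm_symmetryDefect (c : E) (hF : Bornology.IsBounded (F '' Ioi 0)) :
    BddAbove ((fun x => ‖symmetryDefect c F x‖) '' Ioi 0) := by
  obtain ⟨C, hC⟩ := hF.exists_norm_le
  have norm_F_le {x : K} (hx : 0 < x) : ‖F x‖ ≤ C := hC _ (mem_image_of_mem F hx)
  refine ⟨C + C + ‖c‖, forall_mem_image.2 fun x hx => ?_⟩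
  exact norm_sub_le_of_le (norm_add_le_of_le (norm_F_le hx) (norm_F_le (inv_pos.2 hx))) le_rfl

variable [NormedSpace ℝ E] {c : E}

lemma exists_norm_symmetryDefect_le_half_mul
    (hsub : ∀ x : K, 1 ≤ x → (2 : ℝ) • F x = F (x - 1) + c)
    (hdiv : ∀ x : K, 0 ≤ x → x < 1 → (2 : ℝ) • F x = F (x / (1 - x))) {x : K} (hx : 0 < x) :
    ∃ y : K, 0 < y ∧ ‖symmetryDefect c F x‖ ≤ 1 / 2 * ‖symmetryDefect c F y‖ := by
  have of_one_lt {z : K} (hz : 1 < z) :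
      ∃ y : K, 0 < y ∧ ‖symmetryDefect c F z‖ ≤ 1 / 2 * ‖symmetryDefect c F y‖ := by
    refine ⟨z - 1, sub_pos.2 hz, ?_⟩
    rw [← two_smul_symmetryDefect hsub hdiv hz, norm_smul, Real.norm_two]
    linarith
  rcases lt_trichotomy x 1 with hlt | rfl | hgt
  · simpa only [symmetryDefect_inv] using of_one_lt ((one_lt_inv₀ hx).2 hlt)
  · exact ⟨1, one_pos, by simp [symmetryDefect_one hsub hdiv]⟩
  · exact of_one_lt hgt

theorem minkowski_question_mark_symmetry_general
    (hF : Bornology.IsBounded (F '' Ioi 0))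
    (hsub : ∀ x : K, 1 ≤ x → (2 : ℝ) • F x = F (x - 1) + c)
    (hdiv : ∀ x : K, 0 ≤ x → x < 1 → (2 : ℝ) • F x = F (x / (1 - x))) {x : K} (hx : 0 < x) :
    F x + F (1 / x) = c := by
  have norm_nonpos : ‖symmetryDefect c F x‖ ≤ 0 :=
    nonpos_of_forall_exists_le_mul one_half_pos.le one_half_lt_one
      (bddAbove_norm_symmetryDefect c hF)
      (fun _ hy => exists_norm_symmetryDefect_le_half_mul hsub hdiv hy) hx
  rw [one_div]
  exact sub_eq_zero.1 (norm_le_zero_iff.1 norm_nonpos)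

end SymmetryDefect

theorem minkowski_question_mark_symmetry (F : ℝ → ℝ)
    (hcont : ContinuousOn F (Set.Ici 0))
    (hmono : MonotoneOn F (Set.Ici 0))
    (h0 : F 0 = 0)
    (hlim : Filter.Tendsto F Filter.atTop (nhds 1))
    (hfe1 : ∀ x : ℝ, 1 ≤ x → 2 * F x = F (x - 1) + 1)
    (hfe2 : ∀ x : ℝ, 0 ≤ x → x < 1 → 2 * F x = F (x / (1 - x))) :
    ∀ x : ℝ, 0 < x → F x + F (1 / x) = 1 := by
  have hmaps := mapsTo_Icc_of_monotoneOn_Ici_of_tendsto hmono hlim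
  have hbdd : Bornology.IsBounded (F '' Ioi 0) :=
    (Metric.isBounded_Icc (F 0) 1).subset (hmaps.mono_left Ioi_subset_Ici_self).image_subset
  exact fun x hx => minkowski_question_mark_symmetry_general hbdd hfe1 hfe2 hx
end

section
/- For every real p with 1 < p < 2 there exists a continuous nondecreasing function F_p : ℝ → ℝ such that F_p(x) = 0 for all x ≤ p−1, F_p(x) = 1 for all x ≥ 1/(p−1), 2·F_p(x) = F_p(p·x − 1) + 1 for all 1 ≤ x ≤ 1/(p−1), 2·F_p(x) = F_p(x/(p−x)) for all p−1 ≤ x ≤ 1, and F_p(x) + F_p(1/x) = 1 for all x > 0. -/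
/-!
A tree of maps generating a distribution turns into a fixed-point equation for its distribution
function: `F` is the mean of its pullbacks along the inverse branches, extended to all of `ℝ` by
clamping. At every point one of the two pullbacks is a known constant, because one branch has
already left the support, so only half of the uncertainty about `F` survives an averaging step. The
averaging operator is therefore a contraction for the uniform distance, and Banach's theorem
produces `F`. The symmetry `F x + F x⁻¹ = 1` has the same cause: inversion exchanges the branches,
so the defect `F x + F x⁻¹ - 1` is halved along an orbit and, being bounded, vanishes.
-/

open Set Function Filter Topology BoundedContinuousFunction
open scoped NNReal

namespace PMinkowski

section DistributionFunctions

variable {α : Type*} [TopologicalSpace α] {s t : ℝ≥0} {a b : C(α, α)} {F : α →ᵇ ℝ}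

/-- The `s : t` weighted mean of the pullbacks of `F` along `a` and `b`. When `a` and `b` are the
inverse branches of two maps, this is the effect on distribution functions of pushing a measure
forward along one of the two maps, chosen at random with weights `s` and `t`. -/
noncomputable def pullbackAverage (s t : ℝ≥0) (a b : C(α, α)) (F : α →ᵇ ℝ) : α →ᵇ ℝ :=
  s • F.compContinuous a + t • F.compContinuous b

lemma pullbackAverage_apply (x : α) :
    pullbackAverage s t a b F x = s * F (a x) + t * F (b x) := rfl

variable [Preorder α] {l r : α}

/-- For `α = ℝ`, the continuous distribution functions of probability measures carried by `[l, r]`.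
They are bundled as bounded continuous functions in order to carry the uniform distance. -/
def distributionFunctions (l r : α) : Set (α →ᵇ ℝ) :=
  {F | Monotone F ∧ (∀ x, x ≤ l → F x = 0) ∧ ∀ x, r ≤ x → F x = 1}

lemma isClosed_distributionFunctions : IsClosed (distributionFunctions l r) := by
  have continuous_eval (x : α) : Continuous fun F : α →ᵇ ℝ => F x := continuous_eval_const x
  simp only [distributionFunctions, ofPred_and, ofPred_forall]
  refine .inter (isClosed_monotone.preimage continuous_coe) (.inter ?_ ?_)
  · exact isClosed_biInter fun x _ => isClosed_eq (continuous_eval x) continuous_const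
  · exact isClosed_biInter fun x _ => isClosed_eq (continuous_eval x) continuous_const

lemma distributionFunctions_nonempty {l r : ℝ} (h : l < r) :
    (distributionFunctions l r).Nonempty := by
  have hpos : 0 < r - l := sub_pos.2 h
  let ramp (x : ℝ) : ℝ := projIcc 0 1 zero_le_one ((x - l) / (r - l))
  have norm_ramp_le (x : ℝ) : ‖ramp x‖ ≤ 1 := by
    rw [Real.norm_of_nonneg (projIcc _ _ _ _).2.1]
    exact (projIcc _ _ _ _).2.2
  refine ⟨.ofNormedAddCommGroup ramp (by fun_prop) 1 norm_ramp_le, fun x y hxy => ?_,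
    fun x hx => ?_, fun x hx => ?_⟩
  · exact monotone_projIcc zero_le_one (div_le_div_of_nonneg_right (sub_le_sub_right hxy l) hpos.le)
  · exact congrArg Subtype.val
      (projIcc_of_le_left zero_le_one (div_nonpos_of_nonpos_of_nonneg (sub_nonpos.2 hx) hpos.le))
  · exact congrArg Subtype.val
      (projIcc_of_right_le zero_le_one ((one_le_div hpos).2 (sub_le_sub_right hx l)))

/-- `a` and `b` behave like the inverse branches of two maps that send `[l, r]` into intervals of
`[l, r]`, the first below the second, without common interior point: `b` does not leave the part
below `l` before `a` has reached `r`. -/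
structure IsBranchPair (a b : C(α, α)) (l r : α) : Prop where
  lt : l < r
  monotone_left : Monotone a
  monotone_right : Monotone b
  left_le : ∀ x, x ≤ l → a x ≤ l
  le_right : ∀ x, r ≤ x → r ≤ b x
  right_le_or_le_left : ∀ x, b x ≤ l ∨ r ≤ a x

lemma pullbackAverage_apply_of_right_le (hF : F ∈ distributionFunctions l r) {x : α}
    (hx : b x ≤ l) : pullbackAverage s t a b F x = s * F (a x) := by
  rw [pullbackAverage_apply, hF.2.1 _ hx, mul_zero, add_zero]

lemma pullbackAverage_apply_of_le_left (hF : F ∈ distributionFunctions l r) {x : α}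
    (hx : r ≤ a x) : pullbackAverage s t a b F x = s + t * F (b x) := by
  rw [pullbackAverage_apply, hF.2.2 _ hx, mul_one]

namespace IsBranchPair

lemma right_le (h : IsBranchPair a b l r) {x : α} (hx : x ≤ l) : b x ≤ l :=
  (h.right_le_or_le_left x).resolve_right
    fun hr => h.lt.not_ge (hr.trans (h.left_le x hx))

lemma le_left (h : IsBranchPair a b l r) {x : α} (hx : r ≤ x) : r ≤ a x :=
  (h.right_le_or_le_left x).resolve_left
    fun hl => h.lt.not_ge ((h.le_right x hx).trans hl)

lemma mapsTo_pullbackAverage (h : IsBranchPair a b l r) (hst : s + t = 1) :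
    MapsTo (pullbackAverage s t a b) (distributionFunctions l r) (distributionFunctions l r) := by
  intro F hF
  refine ⟨fun x y hxy => ?_, fun x hx => ?_, fun x hx => ?_⟩
  · simp only [pullbackAverage_apply]
    gcongr
    · exact hF.1 (h.monotone_left hxy)
    · exact hF.1 (h.monotone_right hxy)
  · rw [pullbackAverage_apply_of_right_le hF (h.right_le hx), hF.2.1 _ (h.left_le x hx), mul_zero]
  · rw [pullbackAverage_apply_of_le_left hF (h.le_left hx), hF.2.2 _ (h.le_right x hx), mul_one]
    exact_mod_cast hst

lemma lipschitzOnWith_pullbackAverage (h : IsBranchPair a b l r) :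
    LipschitzOnWith (max s t) (pullbackAverage s t a b) (distributionFunctions l r) := by
  refine LipschitzOnWith.of_dist_le_mul fun F hF G hG => (dist_le (by positivity)).2 fun x => ?_
  rcases h.right_le_or_le_left x with hx | hx
  · calc dist (pullbackAverage s t a b F x) (pullbackAverage s t a b G x)
        = s * dist (F (a x)) (G (a x)) := by
          rw [pullbackAverage_apply_of_right_le hF hx, pullbackAverage_apply_of_right_le hG hx,
            ← smul_eq_mul, ← smul_eq_mul, dist_smul₀, Real.norm_of_nonneg s.coe_nonneg]
      _ ≤ max s t * dist F G := by
          gcongr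
          · exact le_max_left s t
          · exact dist_coe_le_dist _
  · calc dist (pullbackAverage s t a b F x) (pullbackAverage s t a b G x)
        = t * dist (F (b x)) (G (b x)) := by
          rw [pullbackAverage_apply_of_le_left hF hx, pullbackAverage_apply_of_le_left hG hx,
            dist_add_left, ← smul_eq_mul, ← smul_eq_mul, dist_smul₀,
            Real.norm_of_nonneg t.coe_nonneg]
      _ ≤ max s t * dist F G := by
          gcongr
          · exact le_max_right s t
          · exact dist_coe_le_dist _

lemma exists_isFixedPt_pullbackAverage (h : IsBranchPair a b l r) (hs : 0 < s) (ht : 0 < t)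
    (hst : s + t = 1) (hne : (distributionFunctions l r).Nonempty) :
    ∃ F ∈ distributionFunctions l r, IsFixedPt (pullbackAverage s t a b) F := by
  have max_lt_one : max s t < 1 :=
    max_lt (hst ▸ lt_add_of_pos_right s ht) (hst ▸ lt_add_of_pos_left t hs)
  have maps := h.mapsTo_pullbackAverage hst
  have contracting : ContractingWith (max s t) (maps.restrict _ _ _) :=
    ⟨max_lt_one, h.lipschitzOnWith_pullbackAverage.mapsToRestrict maps⟩
  obtain ⟨F₀, hF₀⟩ := hne
  obtain ⟨F, hF, hfix, -⟩ := contracting.exists_fixedPoint'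
    isClosed_distributionFunctions.isComplete maps hF₀ (edist_ne_top _ _)
  exact ⟨F, hF, hfix⟩

end IsBranchPair

end DistributionFunctions

section Branches

variable {p x : ℝ}

/-- The inverse `x ↦ x / (p - x)` of the left-child map `y ↦ p * y / (y + 1)` of the `p`-deformed
Calkin–Wilf tree, frozen at its value at `1` to the right of `1`. -/
noncomputable def leftBranch (hp : 1 < p) : C(ℝ, ℝ) where
  toFun x := min x 1 / (p - min x 1)
  continuous_toFun := by
    have den_ne_zero (x : ℝ) : p - min x 1 ≠ 0 := by linarith [min_le_right x 1]
    fun_prop (disch := exact den_ne_zero)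

/-- The inverse `x ↦ p * x - 1` of the right-child map `y ↦ (y + 1) / p` of the `p`-deformed
Calkin–Wilf tree, frozen at its value at `1` to the left of `1`. -/
def rightBranch (p : ℝ) : C(ℝ, ℝ) where
  toFun x := p * max x 1 - 1

lemma leftBranch_of_le_one (hp : 1 < p) (hx : x ≤ 1) : leftBranch hp x = x / (p - x) := by
  simp only [leftBranch, ContinuousMap.coe_mk, min_eq_left hx]

lemma leftBranch_of_one_le (hp : 1 < p) (hx : 1 ≤ x) : leftBranch hp x = 1 / (p - 1) := by
  simp only [leftBranch, ContinuousMap.coe_mk, min_eq_right hx]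

lemma rightBranch_of_le_one (hx : x ≤ 1) : rightBranch p x = p - 1 := by
  simp only [rightBranch, ContinuousMap.coe_mk, max_eq_right hx, mul_one]

lemma rightBranch_of_one_le (hx : 1 ≤ x) : rightBranch p x = p * x - 1 := by
  simp only [rightBranch, ContinuousMap.coe_mk, max_eq_left hx]

lemma monotone_leftBranch (hp : 1 < p) : Monotone (leftBranch hp) := by
  intro x y hxy
  have hmin : min x 1 ≤ min y 1 := min_le_min_right 1 hxy
  have hx : 0 < p - min x 1 := by linarith [min_le_right x 1]
  have hy : 0 < p - min y 1 := by linarith [min_le_right y 1]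
  change min x 1 / (p - min x 1) ≤ min y 1 / (p - min y 1)
  rw [div_le_div_iff₀ hx hy]
  nlinarith

lemma monotone_rightBranch (hp : 0 ≤ p) : Monotone (rightBranch p) := by
  intro x y hxy
  change p * max x 1 - 1 ≤ p * max y 1 - 1
  gcongr

lemma isBranchPair_leftBranch_rightBranch (hp1 : 1 < p) (hp2 : p < 2) :
    IsBranchPair (leftBranch hp1) (rightBranch p) (p - 1) (1 / (p - 1)) where
  lt := by
    rw [lt_div_iff₀ (by linarith)]
    nlinarith
  monotone_left := monotone_leftBranch hp1
  monotone_right := monotone_rightBranch (by linarith)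
  left_le x hx := by
    rw [leftBranch_of_le_one hp1 (by linarith), div_le_iff₀ (by linarith)]
    nlinarith
  le_right x hx := by
    have hx1 : 1 ≤ x := (one_le_one_div (by linarith) (by linarith)).trans hx
    rw [rightBranch_of_one_le hx1]
    rw [div_le_iff₀ (by linarith)] at hx ⊢
    nlinarith
  right_le_or_le_left x :=
    (le_total x 1).imp (fun hx => (rightBranch_of_le_one hx).le)
      (fun hx => (leftBranch_of_one_le hp1 hx).ge)

lemma two_mul_apply_of_one_le (hp : 1 < p) {l : ℝ} {F : ℝ →ᵇ ℝ}
    (hF : F ∈ distributionFunctions l (1 / (p - 1)))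
    (hfix : IsFixedPt (pullbackAverage 2⁻¹ 2⁻¹ (leftBranch hp) (rightBranch p)) F) (hx : 1 ≤ x) :
    2 * F x = F (p * x - 1) + 1 := by
  have average_eq : F x = (2⁻¹ : ℝ≥0) + (2⁻¹ : ℝ≥0) * F (rightBranch p x) :=
    (DFunLike.congr_fun hfix x).symm.trans
      (pullbackAverage_apply_of_le_left hF (leftBranch_of_one_le hp hx).ge)
  rw [average_eq, rightBranch_of_one_le hx]
  push_cast
  ring

lemma two_mul_apply_of_le_one (hp : 1 < p) {r : ℝ} {F : ℝ →ᵇ ℝ}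
    (hF : F ∈ distributionFunctions (p - 1) r)
    (hfix : IsFixedPt (pullbackAverage 2⁻¹ 2⁻¹ (leftBranch hp) (rightBranch p)) F) (hx : x ≤ 1) :
    2 * F x = F (x / (p - x)) := by
  have average_eq : F x = (2⁻¹ : ℝ≥0) * F (leftBranch hp x) :=
    (DFunLike.congr_fun hfix x).symm.trans
      (pullbackAverage_apply_of_right_le hF (rightBranch_of_le_one hx).le)
  rw [average_eq, leftBranch_of_le_one hp hx]
  push_cast
  ring

end Branches

section Symmetry

lemma eq_zero_of_forall_exists_norm_le {α E : Type*} [NormedAddGroup E] {f : α → E} {S : Set α}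
    {K C : ℝ} (hK₀ : 0 ≤ K) (hK₁ : K < 1) (hC : ∀ x ∈ S, ‖f x‖ ≤ C)
    (h : ∀ x ∈ S, ∃ y ∈ S, ‖f x‖ ≤ K * ‖f y‖) {x : α} (hx : x ∈ S) : f x = 0 := by
  have norm_le_pow (n : ℕ) : ∀ x ∈ S, ‖f x‖ ≤ K ^ n * C := by
    induction n with
    | zero => simpa only [pow_zero, one_mul] using hC
    | succ n ih =>
      intro x hx
      obtain ⟨y, hy, hxy⟩ := h x hx
      calc ‖f x‖ ≤ K * ‖f y‖ := hxy
        _ ≤ K * (K ^ n * C) := by gcongr; exact ih y hy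
        _ = K ^ (n + 1) * C := by ring
  have tendsto_zero : Tendsto (fun n : ℕ => K ^ n * C) atTop (𝓝 0) := by
    simpa only [zero_mul] using (tendsto_pow_atTop_nhds_zero_of_lt_one hK₀ hK₁).mul_const C
  exact norm_le_zero_iff.1 (ge_of_tendsto' tendsto_zero fun n => norm_le_pow n x hx)

/-- The amount by which `F` fails to be symmetric under `x ↦ x⁻¹`. -/
noncomputable def inversionDefect (F : ℝ → ℝ) (x : ℝ) : ℝ := F x + F x⁻¹ - 1

variable {p : ℝ} {F : ℝ → ℝ}

lemma inversionDefect_inv (x : ℝ) : inversionDefect F x⁻¹ = inversionDefect F x := by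
  rw [inversionDefect, inversionDefect, inv_inv, add_comm (F x⁻¹)]

lemma two_mul_inversionDefect (hge : ∀ x, 1 ≤ x → 2 * F x = F (p * x - 1) + 1)
    (hle : ∀ x, x ≤ 1 → 2 * F x = F (x / (p - x))) {x : ℝ} (hx : 1 ≤ x) :
    2 * inversionDefect F x = inversionDefect F (p * x - 1) := by
  have hx₀ : x ≠ 0 := by positivity
  have inv_branch : x⁻¹ / (p - x⁻¹) = (p * x - 1)⁻¹ := by
    rw [div_eq_mul_inv, ← mul_inv, mul_sub, mul_inv_cancel₀ hx₀, mul_comm x]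
  have at_inv : 2 * F x⁻¹ = F (p * x - 1)⁻¹ := inv_branch ▸ hle x⁻¹ (inv_le_one_of_one_le₀ hx)
  rw [inversionDefect, inversionDefect]
  linarith [hge x hx]

lemma add_apply_inv_eq_one (hp : 1 < p) {C : ℝ} (hC : ∀ x, |F x| ≤ C)
    (hge : ∀ x, 1 ≤ x → 2 * F x = F (p * x - 1) + 1)
    (hle : ∀ x, x ≤ 1 → 2 * F x = F (x / (p - x))) {x : ℝ} (hx : 0 < x) :
    F x + F x⁻¹ = 1 := by
  have bounded (x : ℝ) : |inversionDefect F x| ≤ 2 * C + 1 := by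
    rw [inversionDefect, abs_le]
    constructor <;> linarith [abs_le.1 (hC x), abs_le.1 (hC x⁻¹)]
  have halved_of_one_le {x : ℝ} (hx : 1 ≤ x) :
      ∃ y ∈ Ioi 0, |inversionDefect F x| ≤ 1 / 2 * |inversionDefect F y| := by
    refine ⟨p * x - 1, mem_Ioi.2 (by nlinarith), ?_⟩
    rw [← two_mul_inversionDefect hge hle hx, abs_mul, abs_two, one_div,
      inv_mul_cancel_left₀ two_ne_zero]
  have halved (x : ℝ) (hx : x ∈ Ioi 0) :
      ∃ y ∈ Ioi 0, |inversionDefect F x| ≤ 1 / 2 * |inversionDefect F y| := by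
    rcases le_total 1 x with h | h
    · exact halved_of_one_le h
    · simpa only [inversionDefect_inv] using halved_of_one_le ((one_le_inv₀ hx).2 h)
  exact sub_eq_zero.1 (eq_zero_of_forall_exists_norm_le (f := inversionDefect F)
    (by norm_num) (by norm_num) (fun x _ => bounded x) halved hx)

end Symmetry

end PMinkowski

open PMinkowski

theorem exists_p_minkowski_question_mark (p : ℝ) (hp1 : 1 < p) (hp2 : p < 2) :
    ∃ F : ℝ → ℝ, Continuous F ∧ Monotone F ∧
      (∀ x : ℝ, x ≤ p - 1 → F x = 0) ∧
      (∀ x : ℝ, 1 / (p - 1) ≤ x → F x = 1) ∧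
      (∀ x : ℝ, 1 ≤ x → x ≤ 1 / (p - 1) → 2 * F x = F (p * x - 1) + 1) ∧
      (∀ x : ℝ, p - 1 ≤ x → x ≤ 1 → 2 * F x = F (x / (p - x))) ∧
      (∀ x : ℝ, 0 < x → F x + F (1 / x) = 1) := by
  have branches := isBranchPair_leftBranch_rightBranch hp1 hp2
  obtain ⟨F, hF, hfix⟩ := branches.exists_isFixedPt_pullbackAverage (s := 2⁻¹) (t := 2⁻¹)
    (by norm_num) (by norm_num) (by norm_num) (distributionFunctions_nonempty branches.lt)
  have hge (x : ℝ) (hx : 1 ≤ x) : 2 * F x = F (p * x - 1) + 1 :=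
    two_mul_apply_of_one_le hp1 hF hfix hx
  have hle (x : ℝ) (hx : x ≤ 1) : 2 * F x = F (x / (p - x)) :=
    two_mul_apply_of_le_one hp1 hF hfix hx
  have hinv (x : ℝ) (hx : 0 < x) : F x + F (1 / x) = 1 := by
    rw [one_div]
    exact add_apply_inv_eq_one hp1 F.norm_coe_le_norm hge hle hx
  exact ⟨F, F.continuous, hF.1, hF.2.1, hF.2.2, fun x hx _ => hge x hx, fun x _ hx => hle x hx,
    hinv⟩
end

section
/- For every real p with 1 < p < 2 there exists a unique continuous function X : [0,∞) → ℝ with X(1) = 1 satisfying X(x+1) = (X(x)+1)/p and X(x/(x+1)) = p·X(x)/(X(x)+1) for all x ≥ 0. Moreover this X is strictly increasing, X(0) = p−1, X(1/x) = 1/X(x) for all x > 0, and X maps [0,∞) onto the half-open interval [p−1, 1/(p−1)). -/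
open Set

/-!
Left and right children in the deformed tree are `p⁻¹`-contractions of `[p - 1, 1 / (p - 1)]`,
each fixing one endpoint, and they send the opposite endpoints to the common point `1`. The
undeformed children subdivide `[0, ∞]` in the same pattern, so Banach's fixed point theorem on the
continuous maps `[0, ∞] → [p - 1, 1 / (p - 1)]` preserving both endpoints yields `X`, as it does for
de Rham's curves. Conversely, a solution is determined on the rationals by descent in the
Calkin–Wilf tree. Descent also gives strict monotonicity and `X (1 / x) = 1 / X x` there;
continuity extends these to `[0, ∞)`, and the inversion formula reduces surjectivity to the
interval `[0, 1]`.
-/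

open scoped ENNReal NNReal

namespace ConjugationMap

section CalkinWilf

theorem eq_one_or_exists_pos_parent {K : Type*} [Field K] [LinearOrder K] [IsStrictOrderedRing K]
    {x : K} (hx : 0 < x) :
    x = 1 ∨ (∃ y, 0 < y ∧ x = y + 1) ∨ ∃ y, 0 < y ∧ x = y / (y + 1) := by
  rcases lt_trichotomy x 1 with hlt | rfl | hgt
  · have hx' : 0 < 1 - x := sub_pos.mpr hlt
    refine .inr (.inr ⟨x / (1 - x), div_pos hx hx', ?_⟩)
    field_simp
    ring
  · exact .inl rfl
  · exact .inr (.inl ⟨x - 1, sub_pos.mpr hgt, (sub_add_cancel x 1).symm⟩)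

@[elab_as_elim]
theorem calkinWilf_induction {P : ℚ → Prop} (one : P 1)
    (right : ∀ q, 0 < q → P q → P (q + 1))
    (left : ∀ q, 0 < q → P q → P (q / (q + 1))) {q : ℚ} (hq : 0 < q) : P q := by
  have natCast_div (m n : ℕ) (hm : 0 < m) (hn : 0 < n) : P (m / n) := by
    induction hN : m + n using Nat.strong_induction_on generalizing m n with
    | _ N ih =>
      have hm' : (0 : ℚ) < m := Nat.cast_pos.mpr hm
      have hn' : (0 : ℚ) < n := Nat.cast_pos.mpr hn
      rcases lt_trichotomy m n with hlt | rfl | hgt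
      · have h := left _ (div_pos hm' (by rwa [sub_pos, Nat.cast_lt]))
          (Nat.cast_sub (R := ℚ) hlt.le ▸ ih _ (by omega) m (n - m) hm (by omega) rfl)
        have hnm : (n : ℚ) - m ≠ 0 := sub_ne_zero.mpr (Nat.cast_injective.ne hlt.ne')
        rwa [div_add_one hnm, div_div_div_cancel_right₀ hnm, add_sub_cancel] at h
      · rwa [div_self hm'.ne']
      · have h := right _ (div_pos (by rwa [sub_pos, Nat.cast_lt]) hn')
          (Nat.cast_sub (R := ℚ) hgt.le ▸ ih _ (by omega) (m - n) n (by omega) hn rfl)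
        rwa [sub_div, div_self hn'.ne', sub_add_cancel] at h
  have hnum : 0 < q.num := Rat.num_pos.mpr hq
  have h := natCast_div q.num.toNat q.den (by omega) q.den_pos
  rwa [← Int.cast_natCast, Int.toNat_of_nonneg hnum.le, Rat.num_div_den] at h

end CalkinWilf

section Density

theorem eqOn_Ioi_of_ratCast {α : Type*} [TopologicalSpace α] [T2Space α] {a : ℝ} {f g : ℝ → α}
    (hf : ContinuousOn f (Ioi a)) (hg : ContinuousOn g (Ioi a))
    (h : ∀ q : ℚ, a < q → f q = g q) : EqOn f g (Ioi a) := by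
  refine EqOn.of_subset_closure (s := Ioi a ∩ range ((↑) : ℚ → ℝ)) ?_ hf hg inter_subset_left
    (Rat.denseRange_cast.open_subset_closure_inter isOpen_Ioi)
  rintro _ ⟨hq, q, rfl⟩
  exact h q hq

theorem strictMonoOn_of_ratCast {α : Type*} [Preorder α] [TopologicalSpace α]
    [OrderClosedTopology α] {s : Set ℝ} [s.OrdConnected] {f : ℝ → α} (hf : ContinuousOn f s)
    (h : StrictMonoOn (fun q : ℚ => f q) ((↑) ⁻¹' interior s)) : StrictMonoOn f s := by
  intro a ha b hb hab
  obtain ⟨q, haq, hqb⟩ := exists_rat_btwn hab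
  obtain ⟨r, hqr, hrb⟩ := exists_rat_btwn hqb
  have hIcc : Icc a b ⊆ s := Set.Icc_subset s ha hb
  have hIoo : Ioo a b ⊆ interior s := interior_maximal (Ioo_subset_Icc_self.trans hIcc) isOpen_Ioo
  have hq : (q : ℝ) ∈ interior s := hIoo ⟨haq, hqb⟩
  have hr : (r : ℝ) ∈ interior s := hIoo ⟨haq.trans hqr, hrb⟩
  have closure_rat {c d : ℝ} (hcd : c < d) : closure (Ioo c d ∩ range ((↑) : ℚ → ℝ)) = Icc c d := by
    rw [closure_ordConnected_inter_rat ordConnected_Ioo (Ioo_infinite hcd).nontrivial,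
      closure_Ioo hcd.ne]
  have hleft : f a ≤ f q := by
    refine ContinuousWithinAt.closure_le (f := f) (g := fun _ => f q)
      (closure_rat haq ▸ left_mem_Icc.mpr haq.le)
      ((hf a ha).mono fun x hx => hIcc ⟨hx.1.1.le, hx.1.2.le.trans hqb.le⟩)
      continuousWithinAt_const ?_
    rintro _ ⟨⟨hax, hxq⟩, x, rfl⟩
    exact (h (hIoo ⟨hax, hxq.trans hqb⟩) hq (Rat.cast_lt.mp hxq)).le
  have hright : f r ≤ f b := by
    refine ContinuousWithinAt.closure_le (f := fun _ => f r) (g := f)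
      (closure_rat hrb ▸ right_mem_Icc.mpr hrb.le) continuousWithinAt_const
      ((hf b hb).mono fun x hx => hIcc ⟨(haq.trans hqr).le.trans hx.1.1.le, hx.1.2.le⟩) ?_
    rintro _ ⟨⟨hrx, hxb⟩, x, rfl⟩
    exact (h hr (hIoo ⟨(haq.trans hqr).trans hrx, hxb⟩) (Rat.cast_lt.mp hrx)).le
  exact hleft.trans_lt ((h hq hr (Rat.cast_lt.mp hqr)).trans_le hright)

end Density

section Children

/-- The left child of `y` in the `p`-deformed Calkin–Wilf tree. -/
noncomputable def leftChild (p y : ℝ) : ℝ := p * y / (y + 1)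

/-- The right child of `y` in the `p`-deformed Calkin–Wilf tree. -/
noncomputable def rightChild (p y : ℝ) : ℝ := (y + 1) / p

variable {p y : ℝ}

theorem leftChild_sub_one (hp : p ≠ 0) : leftChild p (p - 1) = p - 1 := by
  rw [leftChild, sub_add_cancel, mul_div_cancel_left₀ _ hp]

theorem rightChild_sub_one (hp : p ≠ 0) : rightChild p (p - 1) = 1 := by
  rw [rightChild, sub_add_cancel, div_self hp]

theorem leftChild_inv (hy : y ≠ 0) : leftChild p y⁻¹ = (rightChild p y)⁻¹ := by
  unfold leftChild rightChild
  field_simp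
  ring

theorem rightChild_inv (hy : y ≠ 0) : rightChild p y⁻¹ = (leftChild p y)⁻¹ := by
  unfold leftChild rightChild
  field_simp
  ring

theorem leftChild_one_div_sub_one (hp : p ≠ 0) (hp1 : p ≠ 1) :
    leftChild p (1 / (p - 1)) = 1 := by
  rw [one_div, leftChild_inv (sub_ne_zero.mpr hp1), rightChild_sub_one hp, inv_one]

theorem rightChild_one_div_sub_one (hp : p ≠ 0) (hp1 : p ≠ 1) :
    rightChild p (1 / (p - 1)) = 1 / (p - 1) := by
  rw [one_div, rightChild_inv (sub_ne_zero.mpr hp1), leftChild_sub_one hp]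

theorem strictMonoOn_leftChild (hp : 0 < p) : StrictMonoOn (leftChild p) (Ioi (-1)) := by
  intro x hx y hy hxy
  rw [mem_Ioi] at hx hy
  rw [leftChild, leftChild, div_lt_div_iff₀ (by linarith) (by linarith)]
  nlinarith

theorem strictMono_rightChild (hp : 0 < p) : StrictMono (rightChild p) := fun x y hxy => by
  unfold rightChild
  gcongr

theorem strictMonoOn_leftChild_Icc (hp : 0 < p) :
    StrictMonoOn (leftChild p) (Icc (p - 1) (1 / (p - 1))) :=
  (strictMonoOn_leftChild hp).mono fun y hy => by
    rw [mem_Ioi]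
    linarith [hy.1]

theorem mapsTo_leftChild_Icc (hp : 0 < p) (hp1 : p ≠ 1) :
    MapsTo (leftChild p) (Icc (p - 1) (1 / (p - 1))) (Icc (p - 1) 1) := by
  have h := (strictMonoOn_leftChild_Icc hp).monotoneOn.mapsTo_Icc
  rwa [leftChild_sub_one hp.ne', leftChild_one_div_sub_one hp.ne' hp1] at h

theorem mapsTo_leftChild_Ioo (hp : 0 < p) (hp1 : p ≠ 1) :
    MapsTo (leftChild p) (Ioo (p - 1) (1 / (p - 1))) (Ioo (p - 1) 1) := by
  have h := (strictMonoOn_leftChild_Icc hp).mapsTo_Ioo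
  rwa [leftChild_sub_one hp.ne', leftChild_one_div_sub_one hp.ne' hp1] at h

theorem mapsTo_rightChild_Icc (hp : 0 < p) (hp1 : p ≠ 1) :
    MapsTo (rightChild p) (Icc (p - 1) (1 / (p - 1))) (Icc 1 (1 / (p - 1))) := by
  have h := ((strictMono_rightChild hp).monotone.monotoneOn (Icc (p - 1) (1 / (p - 1)))).mapsTo_Icc
  rwa [rightChild_sub_one hp.ne', rightChild_one_div_sub_one hp.ne' hp1] at h

theorem mapsTo_rightChild_Ioo (hp : 0 < p) (hp1 : p ≠ 1) :
    MapsTo (rightChild p) (Ioo (p - 1) (1 / (p - 1))) (Ioo 1 (1 / (p - 1))) := by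
  have h := ((strictMono_rightChild hp).strictMonoOn (Icc (p - 1) (1 / (p - 1)))).mapsTo_Ioo
  rwa [rightChild_sub_one hp.ne', rightChild_one_div_sub_one hp.ne' hp1] at h

theorem lipschitzOnWith_leftChild (hp : 0 < p) :
    LipschitzOnWith p⁻¹.toNNReal (leftChild p) (Ici (p - 1)) := by
  refine LipschitzOnWith.of_dist_le_mul fun x hx y hy => ?_
  rw [mem_Ici, sub_le_iff_le_add] at hx hy
  have hx' : 0 < x + 1 := hp.trans_le hx
  have hy' : 0 < y + 1 := hp.trans_le hy
  have hsub : leftChild p x - leftChild p y = p / ((x + 1) * (y + 1)) * (x - y) := by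
    unfold leftChild
    field_simp
    ring
  have hslope : p / ((x + 1) * (y + 1)) ≤ p⁻¹ :=
    calc p / ((x + 1) * (y + 1)) ≤ p / (p * p) := by gcongr
      _ = p⁻¹ := div_self_mul_self' p
  rw [Real.dist_eq, Real.dist_eq, hsub, abs_mul, abs_of_pos (by positivity),
    Real.coe_toNNReal _ (inv_nonneg.mpr hp.le)]
  gcongr

theorem lipschitzWith_rightChild (hp : 0 < p) : LipschitzWith p⁻¹.toNNReal (rightChild p) := by
  refine LipschitzWith.of_dist_le_mul fun x y => le_of_eq ?_
  have hsub : rightChild p x - rightChild p y = p⁻¹ * (x - y) := by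
    unfold rightChild
    ring
  rw [Real.dist_eq, Real.dist_eq, hsub, abs_mul, abs_of_pos (inv_pos.mpr hp),
    Real.coe_toNNReal _ (inv_nonneg.mpr hp.le)]

end Children

/-- `X` fixes the root `1` and carries the children of every `x ≥ 0` in the Calkin–Wilf tree to the
children of `X x` in its `p`-deformation. The domain `K` is `ℚ` for the tree itself and `ℝ` for its
extension. -/
structure IsConjugation {K : Type*} [Field K] [LinearOrder K] (p : ℝ) (X : K → ℝ) : Prop where
  map_one : X 1 = 1
  map_add_one : ∀ x, 0 ≤ x → X (x + 1) = rightChild p (X x)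
  map_div_add_one : ∀ x, 0 ≤ x → X (x / (x + 1)) = leftChild p (X x)

namespace IsConjugation

variable {p : ℝ}

theorem map_zero {K : Type*} [Field K] [LinearOrder K] {X : K → ℝ} (hX : IsConjugation p X)
    (hp : p ≠ 0) : X 0 = p - 1 := by
  have h := hX.map_add_one 0 le_rfl
  rw [zero_add, hX.map_one, rightChild, eq_div_iff hp, one_mul] at h
  exact eq_sub_of_add_eq h.symm

theorem comp_ratCast {X : ℝ → ℝ} (hX : IsConjugation p X) :
    IsConjugation p fun q : ℚ => X q where
  map_one := by simpa only [Rat.cast_one] using hX.map_one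
  map_add_one q hq := by
    simpa only [Rat.cast_add, Rat.cast_one] using hX.map_add_one q (Rat.cast_nonneg.mpr hq)
  map_div_add_one q hq := by
    simpa only [Rat.cast_div, Rat.cast_add, Rat.cast_one] using
      hX.map_div_add_one q (Rat.cast_nonneg.mpr hq)

section Rat

variable {X Y : ℚ → ℝ}

theorem eqOn_rat (hX : IsConjugation p X) (hY : IsConjugation p Y) : EqOn X Y (Ioi 0) := by
  intro q hq
  refine calkinWilf_induction ?_ (fun q hq ih => ?_) (fun q hq ih => ?_) hq
  · rw [hX.map_one, hY.map_one]
  · rw [hX.map_add_one q hq.le, hY.map_add_one q hq.le, ih]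
  · rw [hX.map_div_add_one q hq.le, hY.map_div_add_one q hq.le, ih]

theorem pos_rat (hX : IsConjugation p X) (hp : 0 < p) {q : ℚ} (hq : 0 < q) : 0 < X q := by
  refine calkinWilf_induction ?_ (fun q hq ih => ?_) (fun q hq ih => ?_) hq
  · rw [hX.map_one]
    exact one_pos
  · rw [hX.map_add_one q hq.le, rightChild]
    positivity
  · rw [hX.map_div_add_one q hq.le, leftChild]
    positivity

theorem map_inv_rat (hX : IsConjugation p X) (hp : 0 < p) {q : ℚ} (hq : 0 < q) :
    X q⁻¹ = (X q)⁻¹ := by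
  refine calkinWilf_induction ?_ (fun q hq ih => ?_) (fun q hq ih => ?_) hq
  · rw [inv_one, hX.map_one, inv_one]
  · have hinv : (q + 1)⁻¹ = q⁻¹ / (q⁻¹ + 1) := by field_simp; ring
    rw [hinv, hX.map_div_add_one _ (inv_nonneg.mpr hq.le), hX.map_add_one q hq.le, ih,
      leftChild_inv (hX.pos_rat hp hq).ne']
  · have hinv : (q / (q + 1))⁻¹ = q⁻¹ + 1 := by field_simp; ring
    rw [hinv, hX.map_add_one _ (inv_nonneg.mpr hq.le), hX.map_div_add_one q hq.le, ih,
      rightChild_inv (hX.pos_rat hp hq).ne']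

theorem mem_Ioo_rat (hX : IsConjugation p X) (hp : p ∈ Ioo (1 : ℝ) 2) {q : ℚ} (hq : 0 < q) :
    X q ∈ Ioo (p - 1) (1 / (p - 1)) := by
  have hp0 : 0 < p := one_pos.trans hp.1
  have hlt_one : p - 1 < 1 := by linarith [hp.2]
  have one_lt : 1 < 1 / (p - 1) := one_lt_one_div (sub_pos.mpr hp.1) hlt_one
  refine calkinWilf_induction ?_ (fun q hq ih => ?_) (fun q hq ih => ?_) hq
  · rw [hX.map_one]
    exact ⟨hlt_one, one_lt⟩
  · rw [hX.map_add_one q hq.le]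
    exact Ioo_subset_Ioo_left hlt_one.le (mapsTo_rightChild_Ioo hp0 hp.1.ne' ih)
  · rw [hX.map_div_add_one q hq.le]
    exact Ioo_subset_Ioo_right one_lt.le (mapsTo_leftChild_Ioo hp0 hp.1.ne' ih)

theorem one_lt_map_add_one_rat (hX : IsConjugation p X) (hp : p ∈ Ioo (1 : ℝ) 2) {q : ℚ}
    (hq : 0 < q) : 1 < X (q + 1) := by
  rw [hX.map_add_one q hq.le]
  exact (mapsTo_rightChild_Ioo (one_pos.trans hp.1) hp.1.ne' (hX.mem_Ioo_rat hp hq)).1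

theorem map_div_add_one_lt_one_rat (hX : IsConjugation p X) (hp : p ∈ Ioo (1 : ℝ) 2) {q : ℚ}
    (hq : 0 < q) : X (q / (q + 1)) < 1 := by
  rw [hX.map_div_add_one q hq.le]
  exact (mapsTo_leftChild_Ioo (one_pos.trans hp.1) hp.1.ne' (hX.mem_Ioo_rat hp hq)).2

theorem strictMonoOn_rat (hX : IsConjugation p X) (hp : p ∈ Ioo (1 : ℝ) 2) :
    StrictMonoOn X (Ioi 0) := by
  have hp0 : 0 < p := one_pos.trans hp.1
  suffices key : ∀ q : ℚ, 0 < q → ∀ r : ℚ, q < r → X q < X r from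
    fun q hq r _ hqr => key q hq r hqr
  intro q hq
  refine calkinWilf_induction (fun r hqr => ?_) (fun q hq ih r hqr => ?_)
    (fun q hq ih r hqr => ?_) hq
  · have h := hX.one_lt_map_add_one_rat hp (sub_pos.mpr hqr)
    rwa [sub_add_cancel, ← hX.map_one] at h
  · have hqr' : q < r - 1 := lt_sub_iff_add_lt.mpr hqr
    rw [← sub_add_cancel r 1, hX.map_add_one q hq.le, hX.map_add_one _ (hq.trans hqr').le]
    exact strictMono_rightChild hp0 (ih _ hqr')
  · have hr : 0 < r := (div_pos hq (by positivity)).trans hqr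
    have hq1 : X (q / (q + 1)) < 1 := hX.map_div_add_one_lt_one_rat hp hq
    rcases eq_one_or_exists_pos_parent hr with rfl | ⟨s, hs, rfl⟩ | ⟨s, hs, rfl⟩
    · rwa [hX.map_one]
    · exact hq1.trans (hX.one_lt_map_add_one_rat hp hs)
    · have hqs : q < s := by
        rw [div_lt_div_iff₀ (by positivity) (by positivity)] at hqr
        linarith
      rw [hX.map_div_add_one q hq.le, hX.map_div_add_one s hs.le]
      exact strictMonoOn_leftChild_Icc hp0 (Ioo_subset_Icc_self (hX.mem_Ioo_rat hp hq))
        (Ioo_subset_Icc_self (hX.mem_Ioo_rat hp hs)) (ih s hqs)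

end Rat

section Real

variable {X Y : ℝ → ℝ}

theorem eqOn (hX : IsConjugation p X) (hY : IsConjugation p Y) (hp : p ≠ 0)
    (hXc : ContinuousOn X (Ici 0)) (hYc : ContinuousOn Y (Ici 0)) : EqOn X Y (Ici 0) := by
  intro x hx
  rcases (mem_Ici.mp hx).eq_or_lt with rfl | hpos
  · rw [hX.map_zero hp, hY.map_zero hp]
  · exact eqOn_Ioi_of_ratCast (hXc.mono Ioi_subset_Ici_self) (hYc.mono Ioi_subset_Ici_self)
      (fun q hq => hX.comp_ratCast.eqOn_rat hY.comp_ratCast (Rat.cast_pos.mp hq)) hpos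

theorem strictMonoOn (hX : IsConjugation p X) (hp : p ∈ Ioo (1 : ℝ) 2)
    (hXc : ContinuousOn X (Ici 0)) : StrictMonoOn X (Ici 0) := by
  refine strictMonoOn_of_ratCast hXc ?_
  rw [interior_Ici, ← Rat.cast_zero, Rat.preimage_cast_Ioi]
  exact hX.comp_ratCast.strictMonoOn_rat hp

theorem sub_one_le (hX : IsConjugation p X) (hp : p ∈ Ioo (1 : ℝ) 2)
    (hXc : ContinuousOn X (Ici 0)) {x : ℝ} (hx : 0 ≤ x) : p - 1 ≤ X x := by
  rw [← hX.map_zero (one_pos.trans hp.1).ne']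
  exact (hX.strictMonoOn hp hXc).monotoneOn self_mem_Ici hx hx

theorem pos (hX : IsConjugation p X) (hp : p ∈ Ioo (1 : ℝ) 2) (hXc : ContinuousOn X (Ici 0))
    {x : ℝ} (hx : 0 ≤ x) : 0 < X x :=
  (sub_pos.mpr hp.1).trans_le (hX.sub_one_le hp hXc hx)

theorem map_one_div (hX : IsConjugation p X) (hp : p ∈ Ioo (1 : ℝ) 2)
    (hXc : ContinuousOn X (Ici 0)) {x : ℝ} (hx : 0 < x) : X (1 / x) = 1 / X x := by
  have hcomp : ContinuousOn (fun x => X x⁻¹) (Ioi 0) :=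
    hXc.comp (continuousOn_inv₀.mono fun x hx => ne_of_gt hx) fun x hx =>
      mem_Ici.mpr (inv_nonneg.mpr (le_of_lt hx))
  have hinv : ContinuousOn (fun x => (X x)⁻¹) (Ioi 0) :=
    (hXc.mono Ioi_subset_Ici_self).inv₀ fun x hx => (hX.pos hp hXc (le_of_lt hx)).ne'
  rw [one_div, one_div]
  refine eqOn_Ioi_of_ratCast hcomp hinv (fun q hq => ?_) hx
  rw [← Rat.cast_inv]
  exact hX.comp_ratCast.map_inv_rat (one_pos.trans hp.1) (Rat.cast_pos.mp hq)

theorem lt_one_div_sub_one (hX : IsConjugation p X) (hp : p ∈ Ioo (1 : ℝ) 2)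
    (hXc : ContinuousOn X (Ici 0)) {x : ℝ} (hx : 0 ≤ x) : X x < 1 / (p - 1) := by
  have hlt : X x < X (x + 1) :=
    hX.strictMonoOn hp hXc hx (mem_Ici.mpr (by positivity)) (lt_add_one x)
  have hpos : 0 < X (x + 1) := hX.pos hp hXc (by positivity)
  have hle : p - 1 ≤ 1 / X (x + 1) := by
    rw [← hX.map_one_div hp hXc (by positivity)]
    exact hX.sub_one_le hp hXc (by positivity)
  exact hlt.trans_le ((le_one_div (sub_pos.mpr hp.1) hpos).mp hle)

theorem image_Ici (hX : IsConjugation p X) (hp : p ∈ Ioo (1 : ℝ) 2)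
    (hXc : ContinuousOn X (Ici 0)) : X '' Ici 0 = Ico (p - 1) (1 / (p - 1)) := by
  have hX0 : X 0 = p - 1 := hX.map_zero (one_pos.trans hp.1).ne'
  have hsurj : Icc (p - 1) 1 ⊆ X '' Icc 0 1 := by
    have h := intermediate_value_Icc zero_le_one (hXc.mono Icc_subset_Ici_self)
    rwa [hX0, hX.map_one] at h
  apply Subset.antisymm
  · rintro _ ⟨x, hx, rfl⟩
    exact ⟨hX.sub_one_le hp hXc hx, hX.lt_one_div_sub_one hp hXc hx⟩
  · rintro y ⟨hy, hy'⟩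
    rcases le_total y 1 with hy1 | hy1
    · exact image_mono Icc_subset_Ici_self (hsurj ⟨hy, hy1⟩)
    · have hy0 : 0 < y := one_pos.trans_le hy1
      have hlt : p - 1 < 1 / y := (lt_one_div hy0 (sub_pos.mpr hp.1)).mp hy'
      obtain ⟨x, hx, hxy⟩ := hsurj ⟨hlt.le, div_le_one_of_le₀ hy1 hy0.le⟩
      have hx0 : 0 < x := hx.1.lt_of_ne fun h => hlt.ne (by rw [← hX0, h, hxy])
      refine ⟨1 / x, (one_div_pos.mpr hx0).le, ?_⟩
      rw [hX.map_one_div hp hXc hx0, hxy, one_div_one_div]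

end Real

end IsConjugation

section DeRham

variable {I E : Type*} [TopologicalSpace I] [LinearOrder I] [OrderClosedTopology I]

theorem exists_continuousMap_glue_at [TopologicalSpace E] {c : I} {g₀ g₁ : C(I, E)}
    (h : g₀ c = g₁ c) :
    ∃ g : C(I, E), (∀ t ≤ c, g t = g₀ t) ∧ ∀ t, c ≤ t → g t = g₁ t := by
  refine ⟨⟨fun t => if t ≤ c then g₀ t else g₁ t, g₀.continuous.if_le g₁.continuous continuous_id
    continuous_const fun t ht => by rw [ht, h]⟩, fun t ht => if_pos ht, fun t ht => ?_⟩
  rcases ht.eq_or_lt with rfl | hlt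
  · exact (if_pos le_rfl).trans h
  · exact if_neg hlt.not_ge

theorem exists_deRham_curve [CompactSpace I] [BoundedOrder I] [MetricSpace E] [CompleteSpace E]
    {a b : E} {φ₀ φ₁ : E → E} {K : ℝ≥0} {σ₀ σ₁ : C(I, I)} {c : I}
    (hφ₀ : ContractingWith K φ₀) (hφ₁ : ContractingWith K φ₁)
    (hφ₀a : φ₀ a = a) (hφ₁b : φ₁ b = b) (hφ : φ₀ b = φ₁ a)
    (hσ₀ : σ₀ ⊥ = ⊥) (hσ₀c : σ₀ c = ⊤) (hσ₁c : σ₁ c = ⊥) (hσ₁ : σ₁ ⊤ = ⊤)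
    (hne : ∃ f : C(I, E), f ⊥ = a ∧ f ⊤ = b) :
    ∃ f : C(I, E), f ⊥ = a ∧ f ⊤ = b ∧
      (∀ t ≤ c, f t = φ₀ (f (σ₀ t))) ∧ ∀ t, c ≤ t → f t = φ₁ (f (σ₁ t)) := by
  let S : Set C(I, E) := {f | f ⊥ = a ∧ f ⊤ = b}
  have refinement (f : S) : ∃ g : S, (∀ t ≤ c, g.1 t = φ₀ (f.1 (σ₀ t))) ∧
      ∀ t, c ≤ t → g.1 t = φ₁ (f.1 (σ₁ t)) := by
    obtain ⟨f, hfa, hfb⟩ := f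
    obtain ⟨g, hg₀, hg₁⟩ := exists_continuousMap_glue_at (c := c)
      (g₀ := (⟨φ₀, hφ₀.toLipschitzWith.continuous⟩ : C(E, E)).comp (f.comp σ₀))
      (g₁ := (⟨φ₁, hφ₁.toLipschitzWith.continuous⟩ : C(E, E)).comp (f.comp σ₁))
      (by simp [hσ₀c, hσ₁c, hfa, hfb, hφ])
    exact ⟨⟨g, by simp [hg₀ ⊥ bot_le, hσ₀, hfa, hφ₀a], by simp [hg₁ ⊤ le_top, hσ₁, hfb, hφ₁b]⟩,
      hg₀, hg₁⟩
  choose T hT₀ hT₁ using refinement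
  have hT : ContractingWith K T := by
    refine ⟨hφ₀.1, LipschitzWith.of_dist_le_mul fun f g => ?_⟩
    refine (ContinuousMap.dist_le (by positivity)).mpr fun t => ?_
    rcases le_total t c with ht | ht
    · rw [hT₀ f t ht, hT₀ g t ht]
      exact (hφ₀.dist_le_mul _ _).trans (by gcongr; exact ContinuousMap.dist_apply_le_dist _)
    · rw [hT₁ f t ht, hT₁ g t ht]
      exact (hφ₁.dist_le_mul _ _).trans (by gcongr; exact ContinuousMap.dist_apply_le_dist _)
  have hS : IsClosed S := (isClosed_eq (by fun_prop) (by fun_prop)).inter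
    (isClosed_eq (by fun_prop) (by fun_prop))
  have : CompleteSpace S := hS.completeSpace_coe
  have : Nonempty S := nonempty_subtype.mpr hne
  set f : S := hT.fixedPoint T
  have hf : T f = f := hT.fixedPoint_isFixedPt
  exact ⟨f, f.2.1, f.2.2, fun t ht => by rw [← hT₀ f t ht, hf],
    fun t ht => by rw [← hT₁ f t ht, hf]⟩

end DeRham

section Existence

/-- The inverse of `x ↦ x / (x + 1)` on `[0, 1]`, extended to `[0, ∞]` by the value `∞`. -/
noncomputable def leftParent : C(ℝ≥0∞, ℝ≥0∞) where
  toFun x := (x⁻¹ - 1)⁻¹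
  continuous_toFun := ((ENNReal.continuous_sub_right 1).comp continuous_inv).inv

/-- The inverse of `x ↦ x + 1` on `[1, ∞]`, extended to `[0, ∞]` by the value `0`. -/
noncomputable def rightParent : C(ℝ≥0∞, ℝ≥0∞) where
  toFun x := x - 1
  continuous_toFun := ENNReal.continuous_sub_right 1

theorem leftParent_ofReal_div_add_one {x : ℝ} (hx : 0 ≤ x) :
    leftParent (ENNReal.ofReal (x / (x + 1))) = ENNReal.ofReal x := by
  rcases hx.eq_or_lt with rfl | hpos
  · simp [leftParent]
  · have hinv : (x / (x + 1))⁻¹ = x⁻¹ + 1 := by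
      field_simp
      ring
    have hsub : (ENNReal.ofReal (x / (x + 1)))⁻¹ - 1 = (ENNReal.ofReal x)⁻¹ := by
      rw [← ENNReal.ofReal_inv_of_pos (by positivity), hinv,
        ENNReal.ofReal_add (by positivity) zero_le_one, ENNReal.ofReal_one,
        ENNReal.add_sub_cancel_right ENNReal.one_ne_top, ENNReal.ofReal_inv_of_pos hpos]
    exact (congrArg _ hsub).trans (inv_inv _)

theorem rightParent_ofReal_add_one {x : ℝ} (hx : 0 ≤ x) :
    rightParent (ENNReal.ofReal (x + 1)) = ENNReal.ofReal x := by
  rw [ENNReal.ofReal_add hx zero_le_one, ENNReal.ofReal_one]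
  exact ENNReal.add_sub_cancel_right ENNReal.one_ne_top

theorem exists_continuousMap_ennreal_Icc {a b : ℝ} (hab : a ≤ b) :
    ∃ f : C(ℝ≥0∞, Icc a b), f ⊥ = ⟨a, left_mem_Icc.mpr hab⟩ ∧ f ⊤ = ⟨b, right_mem_Icc.mpr hab⟩ := by
  refine ⟨⟨fun x => projIcc a b hab (a + ENNReal.truncateToReal (ENNReal.ofReal (b - a)) x),
    continuous_projIcc.comp (continuous_const.add
      (ENNReal.continuous_truncateToReal ENNReal.ofReal_ne_top))⟩, ?_, ?_⟩
  · simp [ENNReal.truncateToReal]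
  · simp [ENNReal.truncateToReal, hab]

variable {p : ℝ}

theorem exists_children_curve (hp : p ∈ Ioo (1 : ℝ) 2) :
    ∃ f : C(ℝ≥0∞, Icc (p - 1) (1 / (p - 1))), (f 0 : ℝ) = p - 1 ∧
      (∀ t ≤ 1, (f t : ℝ) = leftChild p (f (leftParent t))) ∧
      ∀ t, 1 ≤ t → (f t : ℝ) = rightChild p (f (rightParent t)) := by
  have hp0 : 0 < p := one_pos.trans hp.1
  have hlt_one : p - 1 < 1 := by linarith [hp.2]
  have one_lt : 1 < 1 / (p - 1) := one_lt_one_div (sub_pos.mpr hp.1) hlt_one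
  have hle : p - 1 ≤ 1 / (p - 1) := (hlt_one.trans one_lt).le
  have hleft := (mapsTo_leftChild_Icc hp0 hp.1.ne').mono_right (Icc_subset_Icc_right one_lt.le)
  have hright := (mapsTo_rightChild_Icc hp0 hp.1.ne').mono_right (Icc_subset_Icc_left hlt_one.le)
  have hK : p⁻¹.toNNReal < 1 := Real.toNNReal_lt_one.mpr (inv_lt_one_of_one_lt₀ hp.1)
  let a : Icc (p - 1) (1 / (p - 1)) := ⟨p - 1, left_mem_Icc.mpr hle⟩
  let b : Icc (p - 1) (1 / (p - 1)) := ⟨1 / (p - 1), right_mem_Icc.mpr hle⟩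
  obtain ⟨f, hf0, -, hf⟩ := exists_deRham_curve (c := 1) (σ₀ := leftParent) (σ₁ := rightParent)
    (a := a) (b := b)
    ⟨hK, ((lipschitzOnWith_leftChild hp0).mono Icc_subset_Ici_self).mapsToRestrict hleft⟩
    ⟨hK, (lipschitzWith_rightChild hp0).lipschitzOnWith.mapsToRestrict hright⟩
    (Subtype.ext (leftChild_sub_one hp0.ne'))
    (Subtype.ext (rightChild_one_div_sub_one hp0.ne' hp.1.ne'))
    (Subtype.ext ((leftChild_one_div_sub_one hp0.ne' hp.1.ne').trans
      (rightChild_sub_one hp0.ne').symm))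
    (by simp [leftParent]) (by simp [leftParent]) (by simp [rightParent]) (by simp [rightParent])
    (exists_continuousMap_ennreal_Icc hle)
  exact ⟨f, congrArg Subtype.val hf0, fun t ht => congrArg Subtype.val (hf.1 t ht),
    fun t ht => congrArg Subtype.val (hf.2 t ht)⟩

theorem exists_continuous_isConjugation (hp : p ∈ Ioo (1 : ℝ) 2) :
    ∃ X : ℝ → ℝ, Continuous X ∧ IsConjugation p X := by
  obtain ⟨f, hf0, hleft, hright⟩ := exists_children_curve hp
  refine ⟨fun x => f (ENNReal.ofReal x),
    continuous_subtype_val.comp (f.continuous.comp ENNReal.continuous_ofReal),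
    ?_, fun x hx => ?_, fun x hx => ?_⟩
  · rw [ENNReal.ofReal_one, hright 1 le_rfl]
    simp only [rightParent, ContinuousMap.coe_mk, tsub_self]
    rw [hf0, rightChild_sub_one (one_pos.trans hp.1).ne']
  · rw [hright _ (ENNReal.one_le_ofReal.mpr (by linarith)), rightParent_ofReal_add_one hx]
  · rw [hleft _ (ENNReal.ofReal_le_one.mpr (div_le_one_of_le₀ (by linarith) (by linarith))),
      leftParent_ofReal_div_add_one hx]

end Existence

end ConjugationMap

open ConjugationMap

theorem exists_unique_conjugation_map (p : ℝ) (hp1 : 1 < p) (hp2 : p < 2) :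
    ∃ X : ℝ → ℝ,
      (ContinuousOn X (Set.Ici 0) ∧ X 1 = 1 ∧
        (∀ x : ℝ, 0 ≤ x → X (x + 1) = (X x + 1) / p) ∧
        (∀ x : ℝ, 0 ≤ x → X (x / (x + 1)) = p * X x / (X x + 1))) ∧
      (∀ Y : ℝ → ℝ,
        (ContinuousOn Y (Set.Ici 0) ∧ Y 1 = 1 ∧
          (∀ x : ℝ, 0 ≤ x → Y (x + 1) = (Y x + 1) / p) ∧
          (∀ x : ℝ, 0 ≤ x → Y (x / (x + 1)) = p * Y x / (Y x + 1))) →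
        Set.EqOn Y X (Set.Ici 0)) ∧
      StrictMonoOn X (Set.Ici 0) ∧
      X 0 = p - 1 ∧
      (∀ x : ℝ, 0 < x → X (1 / x) = 1 / X x) ∧
      X '' (Set.Ici 0) = Set.Ico (p - 1) (1 / (p - 1)) := by
  have hp : p ∈ Ioo 1 2 := ⟨hp1, hp2⟩
  obtain ⟨X, hXc, hX⟩ := exists_continuous_isConjugation hp
  have hXc : ContinuousOn X (Ici 0) := hXc.continuousOn
  have hp0 : p ≠ 0 := (one_pos.trans hp1).ne'
  refine ⟨X, ⟨hXc, hX.map_one, hX.map_add_one, hX.map_div_add_one⟩, ?_, hX.strictMonoOn hp hXc,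
    hX.map_zero hp0, fun x hx => hX.map_one_div hp hXc hx, hX.image_Ici hp hXc⟩
  rintro Y ⟨hYc, hY_one, hY_add_one, hY_div_add_one⟩
  have hY : IsConjugation p Y := ⟨hY_one, hY_add_one, hY_div_add_one⟩
  exact hY.eqOn hX hp0 hYc hXc
end

section
/- Let p be real with 1 < p < 2 and let X : [0,∞) → ℝ be the unique continuous function with X(1) = 1 satisfying X(x+1) = (X(x)+1)/p and X(x/(x+1)) = p·X(x)/(X(x)+1) for all x ≥ 0. Then X((1+√5)/2) = (1 + √(1+4p))/(2p). -/
open Set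

/-!
Starting at any point of the tree and alternating its two moves `x ↦ x / (x + 1)` and `x ↦ x + 1`
produces numbers converging to the golden ratio. The conjugation map `X` turns this path into the
path of the same moves in the `p`-deformed tree, and one round `y ↦ (p y / (y + 1) + 1) / p` of the
deformed moves contracts `[0, ∞)` towards its fixed point, the positive root of `p y ^ 2 = y + 1`.
Continuity of `X` at the golden ratio identifies the two limits.
-/

open Filter Topology

/-- The composite of the left move `y ↦ p y / (y + 1)` and the right move `y ↦ (y + 1) / p` of the
`p`-deformed Calkin–Wilf tree; its iterates follow the path of the `p`-continued fraction
`[1, 1, 1, …]_p`. The undeformed tree is the case `p = 1`. -/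
noncomputable def calkinWilfZigzag (p y : ℝ) : ℝ :=
  (p * y / (y + 1) + 1) / p

/-- The `p`-deformed golden ratio, the value of the `p`-continued fraction `[1, 1, 1, …]_p`, encoded
as the larger root of `p y ^ 2 = y + 1`. -/
noncomputable def deformedGoldenRatio (p : ℝ) : ℝ :=
  (1 + √(1 + 4 * p)) / (2 * p)

section

variable {p x y : ℝ}

lemma deformedGoldenRatio_one : deformedGoldenRatio 1 = Real.goldenRatio := by
  norm_num [deformedGoldenRatio, Real.goldenRatio]

lemma deformedGoldenRatio_pos (hp : 0 < p) : 0 < deformedGoldenRatio p := by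
  unfold deformedGoldenRatio
  positivity

lemma mul_deformedGoldenRatio_sq (hp : 0 < p) :
    p * deformedGoldenRatio p ^ 2 = deformedGoldenRatio p + 1 := by
  have hsqrt : √(1 + 4 * p) ^ 2 = 1 + 4 * p := Real.sq_sqrt (by positivity)
  unfold deformedGoldenRatio
  generalize √(1 + 4 * p) = s at hsqrt ⊢
  field_simp
  linear_combination hsqrt

lemma calkinWilfZigzag_pos (hp : 0 < p) (hy : 0 ≤ y) : 0 < calkinWilfZigzag p y := by
  unfold calkinWilfZigzag
  positivity

lemma iterate_calkinWilfZigzag_nonneg (hp : 0 < p) (hy : 0 ≤ y) (n : ℕ) :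
    0 ≤ (calkinWilfZigzag p)^[n] y :=
  Function.Iterate.rec (0 ≤ ·) hy (fun _ h ↦ (calkinWilfZigzag_pos hp h).le) n

lemma calkinWilfZigzag_sub_deformedGoldenRatio (hp : 0 < p) (hy : 0 ≤ y) :
    calkinWilfZigzag p y - deformedGoldenRatio p =
      (y - deformedGoldenRatio p) / ((y + 1) * (deformedGoldenRatio p + 1)) := by
  have hpos := deformedGoldenRatio_pos hp
  have hsq := mul_deformedGoldenRatio_sq hp
  unfold calkinWilfZigzag
  field_simp
  linear_combination (-y - 1) * hsq

lemma dist_calkinWilfZigzag_deformedGoldenRatio_le (hp : 0 < p) (hy : 0 ≤ y) :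
    dist (calkinWilfZigzag p y) (deformedGoldenRatio p) ≤
      (deformedGoldenRatio p + 1)⁻¹ * dist y (deformedGoldenRatio p) := by
  have hpos := deformedGoldenRatio_pos hp
  have hden : 0 < (y + 1) * (deformedGoldenRatio p + 1) := by positivity
  rw [Real.dist_eq, Real.dist_eq, calkinWilfZigzag_sub_deformedGoldenRatio hp hy, abs_div,
    abs_of_pos hden, inv_mul_eq_div]
  gcongr
  exact le_mul_of_one_le_left (by positivity) (by linarith)

lemma tendsto_iterate_calkinWilfZigzag (hp : 0 < p) (hy : 0 ≤ y) :
    Tendsto (fun n ↦ (calkinWilfZigzag p)^[n] y) atTop (𝓝 (deformedGoldenRatio p)) := by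
  set c := (deformedGoldenRatio p + 1)⁻¹
  have hpos := deformedGoldenRatio_pos hp
  have hc0 : 0 ≤ c := by positivity
  have hc1 : c < 1 := inv_lt_one_of_one_lt₀ (by linarith)
  have hgeom (n : ℕ) : dist ((calkinWilfZigzag p)^[n] y) (deformedGoldenRatio p) ≤
      c ^ n * dist y (deformedGoldenRatio p) := by
    refine le_geom (u := fun n ↦ dist ((calkinWilfZigzag p)^[n] y) _) hc0 n fun k _ ↦ ?_
    rw [Function.iterate_succ_apply']
    exact dist_calkinWilfZigzag_deformedGoldenRatio_le hp
      (iterate_calkinWilfZigzag_nonneg hp hy k)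
  refine tendsto_iff_dist_tendsto_zero.2 (squeeze_zero (fun _ ↦ dist_nonneg) hgeom ?_)
  simpa using (tendsto_pow_atTop_nhds_zero_of_lt_one hc0 hc1).mul_const _

variable {X : ℝ → ℝ}

lemma map_calkinWilfZigzag
    (hright : ∀ x, 0 < x → X (x + 1) = (X x + 1) / p)
    (hleft : ∀ x, 0 < x → X (x / (x + 1)) = p * X x / (X x + 1)) (hx : 0 < x) :
    X (calkinWilfZigzag 1 x) = calkinWilfZigzag p (X x) := by
  simp only [calkinWilfZigzag, one_mul, div_one]
  rw [hright _ (by positivity), hleft x hx]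

lemma map_iterate_calkinWilfZigzag
    (hright : ∀ x, 0 < x → X (x + 1) = (X x + 1) / p)
    (hleft : ∀ x, 0 < x → X (x / (x + 1)) = p * X x / (X x + 1)) (hx : 0 < x) (n : ℕ) :
    X ((calkinWilfZigzag 1)^[n] x) = (calkinWilfZigzag p)^[n] (X x) := by
  induction n generalizing x with
  | zero => rfl
  | succ n ih =>
    rw [Function.iterate_succ_apply, Function.iterate_succ_apply,
      ih (calkinWilfZigzag_pos one_pos hx.le), map_calkinWilfZigzag hright hleft hx]

theorem conjugation_map_golden_ratio_general (hp : 0 < p)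
    (hcont : ContinuousAt X Real.goldenRatio) (hx : 0 < x) (hXx : 0 ≤ X x)
    (hright : ∀ x, 0 < x → X (x + 1) = (X x + 1) / p)
    (hleft : ∀ x, 0 < x → X (x / (x + 1)) = p * X x / (X x + 1)) :
    X Real.goldenRatio = (1 + √(1 + 4 * p)) / (2 * p) := by
  have hpath : Tendsto (fun n ↦ (calkinWilfZigzag 1)^[n] x) atTop (𝓝 Real.goldenRatio) :=
    deformedGoldenRatio_one ▸ tendsto_iterate_calkinWilfZigzag one_pos hx.le
  have himage : Tendsto (fun n ↦ X ((calkinWilfZigzag 1)^[n] x)) atTop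
      (𝓝 (deformedGoldenRatio p)) := by
    simpa only [map_iterate_calkinWilfZigzag hright hleft hx] using
      tendsto_iterate_calkinWilfZigzag hp hXx
  exact tendsto_nhds_unique (hcont.tendsto.comp hpath) himage

end

theorem conjugation_map_golden_ratio (p : ℝ) (hp1 : 1 < p) (hp2 : p < 2)
    (X : ℝ → ℝ)
    (hcont : ContinuousOn X (Set.Ici 0))
    (hone : X 1 = 1)
    (hfe1 : ∀ x : ℝ, 0 ≤ x → X (x + 1) = (X x + 1) / p)
    (hfe2 : ∀ x : ℝ, 0 ≤ x → X (x / (x + 1)) = p * X x / (X x + 1)) :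
    X ((1 + Real.sqrt 5) / 2) = (1 + Real.sqrt (1 + 4 * p)) / (2 * p) :=
  conjugation_map_golden_ratio_general (zero_lt_one.trans hp1)
    (hcont.continuousAt (Ici_mem_nhds Real.goldenRatio_pos)) one_pos (by simp [hone])
    (fun x hx ↦ hfe1 x hx.le) (fun x hx ↦ hfe2 x hx.le)
end

section
/- Let n ≥ 1 be an integer and let P ∈ ℚ[X] be a polynomial of degree at most n−1. Write P = ∑_{i=0}^{n−1} c_i X^i and define the polynomial ℒ(P)(X) = P(X+1) − 2^{−(n+1)}·P(2X) + (−1)^{n+1}·2^{−(n+1)}·∑_{i=0}^{n−1} c_i·2^i·X^{n−1−i} (so that the last sum equals z^{n−1}·P(2/z) for z ≠ 0). If ℒ(P) is the zero polynomial, then P is the zero polynomial; in other words, the ℚ-linear map ℒ on the space of polynomials of degree ≤ n−1 is injective (hence an isomorphism). -/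
open Polynomial Finset

/-!
Replacing `P` by `(X - 2) * P` and `N` by `N + 1` does not change `H = P / (X - 2) ^ (N + 2)`; on
numerators this reads `ℒ_{N + 1} ((X - 2) * P) = (X - 1) * ℒ_N P`. The points `z + 1`, `2 * z` and
`2 / z` are all `2` at `z = 1`, so `ℒ_N P` takes there the value `P(2)` times a nonzero constant. A
polynomial in the kernel of `ℒ_N` is thus divisible by `X - 2`, and the quotient is in the kernel of
`ℒ_{N - 1}`.
-/

section Reflect

variable {R : Type*}

theorem eval_one_reflect [Semiring R] (N : ℕ) (P : R[X]) :
    (reflect N P).eval 1 = P.eval 1 := by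
  induction P using Polynomial.induction_on' with
  | add P Q hP hQ => rw [reflect_add, eval_add, eval_add, hP, hQ]
  | monomial i a => simp [← C_mul_X_pow_eq_monomial]

theorem reflect_X_sub_one_mul [Ring R] {N : ℕ} {P : R[X]} (hP : P.natDegree ≤ N) :
    reflect (N + 1) ((X - 1) * P) = (1 - X) * reflect N P := by
  have hX : (X - 1 : R[X]).natDegree ≤ 1 := natDegree_X_sub_C_le 1
  rw [add_comm, reflect_mul _ _ hX hP, reflect_sub, reflect_one_X, reflect_one, pow_one]

theorem reflect_eq_sum_range [Semiring R] {N : ℕ} {P : R[X]} (hP : P.natDegree ≤ N) :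
    reflect N P = ∑ i ∈ range (N + 1), C (P.coeff i) * X ^ (N - i) := by
  have hreflect : (reflect N P).natDegree < N + 1 :=
    Nat.lt_succ_of_le (natDegree_reflect_le.trans (max_le le_rfl hP))
  rw [(reflect N P).as_sum_range_C_mul_X_pow' hreflect, ← sum_range_reflect]
  refine sum_congr rfl fun i hi => ?_
  have hi : i ≤ N := Nat.le_of_lt_succ (mem_range.1 hi)
  rw [coeff_reflect, add_tsub_cancel_right, revAt_le (Nat.sub_le N i), Nat.sub_sub_self hi]

theorem natDegree_comp_C_mul_X_le [Semiring R] (P : R[X]) (a : R) :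
    (P.comp (C a * X)).natDegree ≤ P.natDegree :=
  natDegree_comp_le.trans <|
    mul_le_of_le_one_right (Nat.zero_le _) ((natDegree_C_mul_le a X).trans natDegree_X_le)

end Reflect

section ThreeTermMap

variable {K : Type*} [Field K]

/-- The map `ℒ_N`, which sends the numerator `P` of `H(z) = P(z) / (z - 2) ^ (N + 2)` to that of
`H(z + 1) - H(2 * z) + H(2 / z) / z ^ 2` over `(z - 1) ^ (N + 2)`. The term `z ^ N * P(2 / z)` is
encoded as the reflection of `P(2 * z)` in degree `N`; this is only correct for
`P.natDegree ≤ N`. -/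
noncomputable def threeTermMap (N : ℕ) (P : K[X]) : K[X] :=
  P.comp (X + 1) - C (2 ^ (N + 2))⁻¹ * P.comp (C 2 * X) +
    C ((-1) ^ N * (2 ^ (N + 2))⁻¹) * reflect N (P.comp (C 2 * X))

theorem eval_one_threeTermMap (N : ℕ) (P : K[X]) :
    (threeTermMap N P).eval 1 = (1 - (2 ^ (N + 2))⁻¹ * (1 - (-1) ^ N)) * P.eval 2 := by
  simp only [threeTermMap, eval_add, eval_sub, eval_mul, eval_C, eval_one_reflect, eval_comp,
    eval_X, eval_one, mul_one, one_add_one_eq_two]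
  ring

theorem threeTermMap_X_sub_two_mul [NeZero (2 : K)] {N : ℕ} {P : K[X]} (hP : P.natDegree ≤ N) :
    threeTermMap (N + 1) ((X - C 2) * P) = (X - 1) * threeTermMap N P := by
  have shift : ((X - C 2) * P).comp (X + 1) = (X - 1) * P.comp (X + 1) := by
    rw [mul_comp, sub_comp, X_comp, C_comp, C_ofNat]
    ring
  have scale : ((X - C 2) * P).comp (C 2 * X) = C 2 * ((X - 1) * P.comp (C 2 * X)) := by
    rw [mul_comp, sub_comp, X_comp, C_comp]
    ring
  have hscaled : (P.comp (C 2 * X)).natDegree ≤ N :=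
    (natDegree_comp_C_mul_X_le P 2).trans hP
  have hcoeff : (2 ^ (N + 1 + 2) : K)⁻¹ * 2 = (2 ^ (N + 2))⁻¹ := by
    field_simp
    ring
  simp only [threeTermMap, shift, scale, reflect_C_mul, reflect_X_sub_one_mul hscaled, ← hcoeff,
    pow_succ (-1 : K) N, C_mul, C_neg, C_1]
  ring

theorem one_sub_inv_two_pow_mul_one_sub_neg_one_pow_ne_zero [CharZero K] (N : ℕ) :
    (1 - (2 ^ (N + 2))⁻¹ * (1 - (-1) ^ N) : K) ≠ 0 := by
  rcases N.even_or_odd with hN | hN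
  · simp [hN.neg_one_pow]
  · have hpow : (2 : K) ^ (N + 1) ≠ 1 := by
      exact_mod_cast (Nat.one_lt_two_pow N.succ_ne_zero).ne'
    have hcoeff : (1 - (2 ^ (N + 2))⁻¹ * (1 - -1) : K) = 1 - (2 ^ (N + 1))⁻¹ := by
      field_simp
      ring
    rwa [hN.neg_one_pow, hcoeff, sub_ne_zero, ne_comm, inv_ne_one]

theorem isRoot_two_of_threeTermMap_eq_zero [CharZero K] {N : ℕ} {P : K[X]}
    (hP : threeTermMap N P = 0) : P.IsRoot 2 := by
  have heval := eval_one_threeTermMap N P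
  rw [hP, eval_zero, zero_eq_mul] at heval
  exact heval.resolve_left (one_sub_inv_two_pow_mul_one_sub_neg_one_pow_ne_zero N)

theorem threeTermMap_eq_sum_range {N : ℕ} {P : K[X]} (hP : P.natDegree ≤ N) :
    threeTermMap N P = P.comp (X + 1) - C (2 ^ (N + 2))⁻¹ * P.comp (2 * X) +
      C ((-1) ^ (N + 2) * (2 ^ (N + 2))⁻¹) *
        ∑ i ∈ range (N + 1), C (P.coeff i * 2 ^ i) * X ^ (N - i) := by
  have hscaled : (P.comp (C 2 * X)).natDegree ≤ N :=
    (natDegree_comp_C_mul_X_le P 2).trans hP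
  have hsign : (-1 : K) ^ (N + 2) = (-1) ^ N := by ring
  rw [threeTermMap, reflect_eq_sum_range hscaled, hsign, ← C_ofNat 2]
  simp only [comp_C_mul_X_coeff]

theorem L_map_injective_general [CharZero K] {N : ℕ} {P : K[X]} (hdeg : P.natDegree ≤ N)
    (hP : threeTermMap N P = 0) : P = 0 := by
  induction N generalizing P with
  | zero =>
    have hroot := isRoot_two_of_threeTermMap_eq_zero hP
    rw [eq_C_of_natDegree_le_zero hdeg] at hroot ⊢
    rw [eval_C.symm.trans hroot, C_0]
  | succ N ih =>
    obtain ⟨Q, rfl⟩ := dvd_iff_isRoot.2 (isRoot_two_of_threeTermMap_eq_zero hP)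
    rcases eq_or_ne Q 0 with rfl | hQ₀
    · exact mul_zero _
    have hQdeg : Q.natDegree ≤ N := by
      rw [(monic_X_sub_C 2).natDegree_mul' hQ₀, natDegree_X_sub_C] at hdeg
      lia
    rw [threeTermMap_X_sub_two_mul hQdeg] at hP
    have hQ : threeTermMap N Q = 0 := (mul_eq_zero.1 hP).resolve_left (X_sub_C_ne_zero 1)
    rw [ih hQdeg hQ, mul_zero]

end ThreeTermMap

theorem L_map_injective (n : ℕ) (hn : 1 ≤ n) (P : Polynomial ℚ)
    (hdeg : P.natDegree ≤ n - 1)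
    (hLP : P.comp (Polynomial.X + 1)
        - Polynomial.C (((2 : ℚ) ^ (n + 1))⁻¹) * P.comp (2 * Polynomial.X)
        + Polynomial.C ((-1 : ℚ) ^ (n + 1) * ((2 : ℚ) ^ (n + 1))⁻¹) *
            ∑ i ∈ Finset.range n, Polynomial.C (P.coeff i * 2 ^ i) * Polynomial.X ^ (n - 1 - i)
      = 0) :
    P = 0 := by
  obtain ⟨N, rfl⟩ := Nat.exists_eq_add_of_le' hn
  exact L_map_injective_general hdeg ((threeTermMap_eq_sum_range hdeg).trans hLP)
end

section
/- Let Υ : ℂ ∖ {1} → ℂ be analytic. Suppose H₁ and H₂ are analytic functions on ℂ ∖ {2} such that H_i(z) → 0 as |z| → ∞ for i = 1,2, and such that H_i(z+1) − H_i(2z) + H_i(2/z)/z² = Υ(z) for every z ∈ ℂ ∖ {0, 1} and i = 1,2. Then H₁ = H₂ on ℂ ∖ {2}. -/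
open Set Filter Bornology

/-!
In the coordinate `u = 1 / (w - 2)`, the function `F u = u⁻² H (2 + u⁻¹)` built from a homogeneous
solution `H` satisfies `F u = ¼ (F (u / 2) - F (-(u + 1) / 2))`. Solving for the last term expresses
`F` near `0` by its values near `-1/2` and `-1`, so `F` extends continuously across `u = 0`.
Both inner maps preserve every disc of radius at least one about `0`, and the coefficients have
total size `1/2 < 1`, so the maximum of `‖F‖` on such a disc is zero.
-/

theorem eqOn_zero_of_eq_smul_add_smul {𝕜 X E : Type*} [NormedField 𝕜] [TopologicalSpace X]
    [NormedAddCommGroup E] [NormedSpace 𝕜 E] {K : Set X} (hK : IsCompact K) {f : X → E}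
    (hf : ContinuousOn f K) {φ ψ : X → X} (hφ : MapsTo φ K K) (hψ : MapsTo ψ K K) {a b : 𝕜}
    (hab : ‖a‖ + ‖b‖ < 1) (h : ∀ x ∈ K, f x = a • f (φ x) + b • f (ψ x)) : EqOn f 0 K := by
  intro x hx
  obtain ⟨m, hm, hmax⟩ := hK.exists_isMaxOn ⟨x, hx⟩ hf.norm
  have hcontract : ‖f m‖ ≤ (‖a‖ + ‖b‖) * ‖f m‖ :=
    calc ‖f m‖ = ‖a • f (φ m) + b • f (ψ m)‖ := by rw [← h m hm]
      _ ≤ ‖a‖ * ‖f (φ m)‖ + ‖b‖ * ‖f (ψ m)‖ := by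
        simpa only [norm_smul] using norm_add_le (a • f (φ m)) (b • f (ψ m))
      _ ≤ ‖a‖ * ‖f m‖ + ‖b‖ * ‖f m‖ := by
        gcongr
        exacts [hmax (hφ hm), hmax (hψ hm)]
      _ = (‖a‖ + ‖b‖) * ‖f m‖ := (add_mul _ _ _).symm
  have hm_zero : ‖f m‖ ≤ 0 := by nlinarith [norm_nonneg (f m)]
  exact norm_le_zero_iff.mp ((hmax hx).trans hm_zero)

section

variable {𝕜 E : Type*} [RCLike 𝕜] [NormedAddCommGroup E] [NormedSpace 𝕜 E]

/-- The three-term functional equation `H(z+1) − H(2z) + H(2/z)·z⁻² = Υ(z)` on `𝕜 ∖ {0, 1}`, for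
vector-valued `H` and `Υ`. -/
def ThreeTermEquation (H Υ : 𝕜 → E) : Prop :=
  ∀ z : 𝕜, z ≠ 0 → z ≠ 1 → H (z + 1) - H (2 * z) + (z ^ 2)⁻¹ • H (2 / z) = Υ z

/-- The two-scale equation `F(u) = ¼ (F(u/2) − F(−(u+1)/2))` at the points of `s`: the form taken by
the homogeneous three-term equation in the coordinate `u = 1 / (w - 2)`. -/
def TwoScaleEquationOn (F : 𝕜 → E) (s : Set 𝕜) : Prop :=
  ∀ u ∈ s, F u = (4⁻¹ : 𝕜) • (F (u / 2) - F (-(u + 1) / 2))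

/-- The function `u ↦ u⁻² H(2 + u⁻¹)`, which expresses `H` in the coordinate `u = 1 / (w - 2)` with
a weight that makes the coefficients of the three-term equation constant. The value at `u = 0` is
the junk value `0`. -/
def invertAtTwo (H : 𝕜 → E) (u : 𝕜) : E :=
  (u ^ 2)⁻¹ • H (2 + u⁻¹)

theorem ThreeTermEquation.sub {H₁ H₂ Υ₁ Υ₂ : 𝕜 → E} (h₁ : ThreeTermEquation H₁ Υ₁)
    (h₂ : ThreeTermEquation H₂ Υ₂) : ThreeTermEquation (H₁ - H₂) (Υ₁ - Υ₂) := by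
  intro z hz₀ hz₁
  simp only [Pi.sub_apply, ← h₁ z hz₀ hz₁, ← h₂ z hz₀ hz₁]
  module

theorem ThreeTermEquation.twoScaleEquationOn_invertAtTwo {H : 𝕜 → E}
    (h : ThreeTermEquation H 0) : TwoScaleEquationOn (invertAtTwo H) {0, -1}ᶜ := by
  intro u hu
  obtain ⟨hu₀, hu₁⟩ : u ≠ 0 ∧ u ≠ -1 := by simpa using hu
  have hu₁' : u + 1 ≠ 0 := fun hu₂ => hu₁ (eq_neg_of_add_eq_zero_left hu₂)
  have hz : 1 + u⁻¹ = (u + 1) / u := by field_simp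
  have h_shift : 1 + u⁻¹ + 1 = 2 + u⁻¹ := by ring
  have h_double : 2 * (1 + u⁻¹) = 2 + (u / 2)⁻¹ := by field_simp
  have h_invert : 2 / (1 + u⁻¹) = 2 + (-(u + 1) / 2)⁻¹ := by field_simp; ring
  have h_eq := h (1 + u⁻¹) (hz ▸ div_ne_zero hu₁' hu₀) (by simpa using hu₀)
  rw [h_shift, h_double, h_invert, Pi.zero_apply, add_eq_zero_iff_eq_neg, sub_eq_iff_eq_add] at h_eq
  simp only [invertAtTwo, h_eq]
  match_scalars <;> field_simp <;> norm_num

theorem continuousOn_invertAtTwo {H : 𝕜 → E} (hH : ContinuousOn H {2}ᶜ) :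
    ContinuousOn (invertAtTwo H) {0}ᶜ := by
  have h_inv : ContinuousOn (fun u : 𝕜 => 2 + u⁻¹) {0}ᶜ :=
    continuousOn_const.add continuousOn_inv₀
  have h_maps : MapsTo (fun u : 𝕜 => 2 + u⁻¹) {0}ᶜ {2}ᶜ := fun u hu => by simpa using hu
  have h_weight : ContinuousOn (fun u : 𝕜 => (u ^ 2)⁻¹) {0}ᶜ :=
    (continuousOn_pow 2).inv₀ fun u hu => pow_ne_zero 2 hu
  exact h_weight.smul (hH.comp h_inv h_maps)

theorem invertAtTwo_inv_sub_two (H : 𝕜 → E) (w : 𝕜) :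
    invertAtTwo H (w - 2)⁻¹ = (w - 2) ^ 2 • H w := by
  simp [invertAtTwo]

/-- The function `F` with its value at `0` replaced by the one that the two-scale equation at
`u = -1` prescribes. -/
def extendAtZero (F : 𝕜 → E) : 𝕜 → E :=
  Function.update F 0 (F (-1 / 2) - (4 : 𝕜) • F (-1))

theorem extendAtZero_zero (F : 𝕜 → E) : extendAtZero F 0 = F (-1 / 2) - (4 : 𝕜) • F (-1) :=
  Function.update_self _ _ _

theorem extendAtZero_of_ne (F : 𝕜 → E) {u : 𝕜} (hu : u ≠ 0) : extendAtZero F u = F u :=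
  Function.update_of_ne hu _ _

namespace TwoScaleEquationOn

theorem eq_zero_of_continuous {F : 𝕜 → E} (h : TwoScaleEquationOn F univ) (hF : Continuous F) :
    F = 0 := by
  funext u
  set R : ℝ := max 1 ‖u‖
  have hR : 1 ≤ R := le_max_left _ _
  have h_half : MapsTo (fun v : 𝕜 => v / 2) (Metric.closedBall 0 R) (Metric.closedBall 0 R) := by
    intro v hv
    rw [mem_closedBall_zero_iff] at hv ⊢
    rw [norm_div, RCLike.norm_ofNat]
    linarith [norm_nonneg v]
  have h_flip : MapsTo (fun v : 𝕜 => -(v + 1) / 2) (Metric.closedBall 0 R)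
      (Metric.closedBall 0 R) := by
    intro v hv
    rw [mem_closedBall_zero_iff] at hv ⊢
    rw [norm_div, norm_neg, RCLike.norm_ofNat]
    linarith [norm_add_le v 1, norm_one (α := 𝕜)]
  refine eqOn_zero_of_eq_smul_add_smul (isCompact_closedBall 0 R) hF.continuousOn h_half h_flip
    (a := (4⁻¹ : 𝕜)) (b := -4⁻¹) ?_ (fun v _ => ?_) (x := u) ?_
  · norm_num
  · rw [h v (mem_univ v), smul_sub, neg_smul, sub_eq_add_neg]
  · exact mem_closedBall_zero_iff.mpr (le_max_right _ _)

theorem apply_eq_sub {F : 𝕜 → E} {s : Set 𝕜} (h : TwoScaleEquationOn F s) {u : 𝕜}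
    (hu : -(2 * u + 1) ∈ s) : F u = F (-(2 * u + 1) / 2) - (4 : 𝕜) • F (-(2 * u + 1)) := by
  have h_inner : -(-(2 * u + 1) + 1) / 2 = u := by ring
  rw [h _ hu, h_inner]
  module

theorem continuous_extendAtZero {F : 𝕜 → E} (h : TwoScaleEquationOn F {0, -1}ᶜ)
    (hF : ContinuousOn F {0}ᶜ) : Continuous (extendAtZero F) := by
  have hF_at {u : 𝕜} (hu : u ≠ 0) : ContinuousAt F u :=
    hF.continuousAt (isOpen_ne.mem_nhds hu)
  refine continuous_iff_continuousAt.mpr fun u => ?_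
  rcases eq_or_ne u 0 with rfl | hu
  · have h_formula : ContinuousAt
        (fun v : 𝕜 => F (-(2 * v + 1) / 2) - (4 : 𝕜) • F (-(2 * v + 1))) 0 := by
      refine .sub (.comp (hF_at ?_) ?_) (.const_smul (.comp (hF_at ?_) ?_) _)
      all_goals first | fun_prop | norm_num
    refine h_formula.congr ?_
    have h_ne : ∀ᶠ v : 𝕜 in nhds 0, -(2 * v + 1) ≠ 0 :=
      ContinuousAt.eventually_ne (by fun_prop) (by simp)
    filter_upwards [h_ne] with v hv
    rcases eq_or_ne v 0 with rfl | hv₀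
    · simp [extendAtZero_zero]
    · have hv₁ : -(2 * v + 1) ≠ -1 := by simpa using hv₀
      rw [extendAtZero_of_ne F hv₀, h.apply_eq_sub (u := v) (not_or.mpr ⟨hv, hv₁⟩)]
  · exact (continuousAt_update_of_ne hu).mpr (hF_at hu)

theorem extendAtZero_compl_singleton {F : 𝕜 → E} (h : TwoScaleEquationOn F {0, -1}ᶜ) :
    TwoScaleEquationOn (extendAtZero F) {0}ᶜ := by
  intro u hu
  have hu₀ : u ≠ 0 := hu
  have hu_half : u / 2 ≠ 0 := div_ne_zero hu₀ two_ne_zero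
  rcases eq_or_ne u (-1) with rfl | hu₁
  · simp only [neg_add_cancel, neg_zero, zero_div, extendAtZero_zero,
      extendAtZero_of_ne F hu₀, extendAtZero_of_ne F hu_half]
    module
  · have hu_flip : -(u + 1) / 2 ≠ 0 :=
      div_ne_zero (neg_ne_zero.mpr fun hu₂ => hu₁ (eq_neg_of_add_eq_zero_left hu₂)) two_ne_zero
    rw [extendAtZero_of_ne F hu₀, extendAtZero_of_ne F hu_half, extendAtZero_of_ne F hu_flip]
    exact h u (by simp [hu₀, hu₁])

theorem univ_of_continuous {F : 𝕜 → E} (h : TwoScaleEquationOn F {0}ᶜ) (hF : Continuous F) :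
    TwoScaleEquationOn F univ := by
  have h_ext : F = fun u => (4⁻¹ : 𝕜) • (F (u / 2) - F (-(u + 1) / 2)) :=
    hF.ext_on (dense_compl_singleton 0) (by fun_prop) h
  exact fun u _ => congrFun h_ext u

theorem eqOn_zero {F : 𝕜 → E} (h : TwoScaleEquationOn F {0, -1}ᶜ) (hF : ContinuousOn F {0}ᶜ) :
    EqOn F 0 {0}ᶜ := by
  intro u hu
  have h_cont := h.continuous_extendAtZero hF
  have h_eq := h.extendAtZero_compl_singleton.univ_of_continuous h_cont
  have h_zero : extendAtZero F = 0 := h_eq.eq_zero_of_continuous h_cont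
  rw [← extendAtZero_of_ne F hu, h_zero]

end TwoScaleEquationOn

theorem ThreeTermEquation.eqOn_zero {H : 𝕜 → E} (h : ThreeTermEquation H 0)
    (hH : ContinuousOn H {2}ᶜ) : EqOn H 0 {2}ᶜ := by
  intro w hw
  have hw' : w - 2 ≠ 0 := sub_ne_zero.mpr hw
  have h_zero := h.twoScaleEquationOn_invertAtTwo.eqOn_zero (continuousOn_invertAtTwo hH)
    (show (w - 2)⁻¹ ∈ ({0}ᶜ : Set 𝕜) from inv_ne_zero hw')
  rw [invertAtTwo_inv_sub_two] at h_zero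
  exact (smul_eq_zero.mp h_zero).resolve_left (pow_ne_zero 2 hw')

theorem three_term_equation_unique_solution_general {Υ H₁ H₂ : 𝕜 → E}
    (hH₁ : ContinuousOn H₁ {2}ᶜ) (hH₂ : ContinuousOn H₂ {2}ᶜ)
    (heq₁ : ThreeTermEquation H₁ Υ) (heq₂ : ThreeTermEquation H₂ Υ) : EqOn H₁ H₂ {2}ᶜ := by
  have h_diff : ThreeTermEquation (H₁ - H₂) 0 := sub_self Υ ▸ heq₁.sub heq₂
  exact fun w hw => sub_eq_zero.mp (h_diff.eqOn_zero (hH₁.sub hH₂) hw)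

end

theorem three_term_equation_unique_solution
    (Υ H₁ H₂ : ℂ → ℂ)
    (hΥ : AnalyticOnNhd ℂ Υ {(1 : ℂ)}ᶜ)
    (hH₁ : AnalyticOnNhd ℂ H₁ {(2 : ℂ)}ᶜ)
    (hH₂ : AnalyticOnNhd ℂ H₂ {(2 : ℂ)}ᶜ)
    (hlim₁ : Filter.Tendsto H₁ (Bornology.cobounded ℂ) (nhds 0))
    (hlim₂ : Filter.Tendsto H₂ (Bornology.cobounded ℂ) (nhds 0))
    (heq₁ : ∀ z : ℂ, z ≠ 0 → z ≠ 1 → H₁ (z + 1) - H₁ (2 * z) + H₁ (2 / z) / z ^ 2 = Υ z)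
    (heq₂ : ∀ z : ℂ, z ≠ 0 → z ≠ 1 → H₂ (z + 1) - H₂ (2 * z) + H₂ (2 / z) / z ^ 2 = Υ z) :
    Set.EqOn H₁ H₂ {(2 : ℂ)}ᶜ :=
  three_term_equation_unique_solution_general hH₁.continuousOn hH₂.continuousOn
    (fun z hz₀ hz₁ => by simpa [div_eq_inv_mul] using heq₁ z hz₀ hz₁)
    (fun z hz₀ hz₁ => by simpa [div_eq_inv_mul] using heq₂ z hz₀ hz₁)
end
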